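/- arXiv:1208.0713 — 2 statements merged into one kernel-verified Lean document; each statement's English description precedes it below -/
import Mathlib

section
/- Let n ≥ m ≥ 1, u, v ∈ A+ and Z ∈ {X,Y}. If u and v agree on condensed rankers from uR^Z_{m,n} and if r ∈ uR^Z_{m,n} is defined on both u and v, then there exists a ranker r' ∈ uR^Z_{m,n} which is condensed on both u and v and which coincides with r on both words, i.e. r'(u) = r(u) and r'(v) = r(v). -/
namespace RankerPaper

variable {A : Type*} [DecidableEq A]

/-- Letters of rankers: `X a` ("next `a` to the right") and `Y a` ("next `a` to the left"). -/
inductive RLetter (A : Type*) where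
  | X : A → RLetter A
  | Y : A → RLetter A
  deriving DecidableEq

/-- Least `a`-position of `u` strictly greater than `q` (positions are 1-indexed). -/
def nextOcc (u : List A) (a : A) (q : ℕ) : Option ℕ :=
  ((List.range (u.length + 2)).filter (fun i => decide (q < i ∧ u[i-1]? = some a))).head?

/-- Greatest `a`-position of `u` strictly less than `q` (positions are 1-indexed). -/
def prevOcc (u : List A) (a : A) (q : ℕ) : Option ℕ :=
  ((List.range (u.length + 2)).filter
    (fun i => decide (1 ≤ i ∧ i < q ∧ u[i-1]? = some a))).getLast?

/-- One evaluation step of a ranker letter from position `q`. -/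
def stepR (u : List A) : RLetter A → ℕ → Option ℕ
  | .X a, q => nextOcc u a q
  | .Y a, q => prevOcc u a q

/-- Evaluation of a ranker from position `q`, processing letters left to right. -/
def evalFrom (u : List A) : List (RLetter A) → ℕ → Option ℕ
  | [], q => some q
  | z :: r, q => (stepR u z q).bind (evalFrom u r)

/-- Starting position: `0` for an `X`-letter, `|u|+1` for a `Y`-letter. -/
def startPos (u : List A) : RLetter A → ℕ
  | .X _ => 0
  | .Y _ => u.length + 1

/-- The position `r(u)` defined by the ranker `r` on `u` (`none` if undefined;
empty rankers are considered undefined, rankers being nonempty words). -/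
def evalR (u : List A) (r : List (RLetter A)) : Option ℕ :=
  match r with
  | [] => none
  | z :: t => evalFrom u (z :: t) (startPos u z)

/-- `r` is defined on `u`. -/
def Defined (u : List A) (r : List (RLetter A)) : Prop := (evalR u r).isSome

/-- The position `r(u)` (defaulting to `0` when undefined). -/
def pos (u : List A) (r : List (RLetter A)) : ℕ := (evalR u r).getD 0

/-- Do two ranker letters have the same direction? -/
def sameDir : RLetter A → RLetter A → Bool
  | .X _, .X _ => true
  | .Y _, .Y _ => true
  | _, _ => false

/-- Number of (alternating) blocks of a ranker. -/
def numBlocks : List (RLetter A) → ℕ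
  | [] => 0
  | [_] => 1
  | z :: w :: t => (if sameDir z w then 0 else 1) + numBlocks (w :: t)

def startsX (r : List (RLetter A)) : Prop := ∃ a t, r = RLetter.X a :: t
def startsY (r : List (RLetter A)) : Prop := ∃ a t, r = RLetter.Y a :: t
def endsX (r : List (RLetter A)) : Prop := ∃ a, r.getLast? = some (RLetter.X a)
def endsY (r : List (RLetter A)) : Prop := ∃ a, r.getLast? = some (RLetter.Y a)

/-- `R^X_{m,n}`: rankers with exactly `m` blocks, depth `n`, starting with an `X`-block. -/
def RX (m n : ℕ) (r : List (RLetter A)) : Prop :=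
  numBlocks r = m ∧ r.length = n ∧ startsX r

/-- `R^Y_{m,n}`: rankers with exactly `m` blocks, depth `n`, starting with a `Y`-block. -/
def RY (m n : ℕ) (r : List (RLetter A)) : Prop :=
  numBlocks r = m ∧ r.length = n ∧ startsY r

/-- `uR^X_{m,n}`. -/
def uRX (m n : ℕ) (r : List (RLetter A)) : Prop :=
  (∃ m' n', m' ≤ m ∧ n' ≤ n ∧ RX m' n' r) ∨ (∃ m' n', m' < m ∧ n' < n ∧ RY m' n' r)

/-- `uR^Y_{m,n}`. -/
def uRY (m n : ℕ) (r : List (RLetter A)) : Prop :=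
  (∃ m' n', m' ≤ m ∧ n' ≤ n ∧ RY m' n' r) ∨ (∃ m' n', m' < m ∧ n' < n ∧ RX m' n' r)

/-- `uR_{m,n} = uR^X_{m,n} ∪ uR^Y_{m,n}`. -/
def uR (m n : ℕ) (r : List (RLetter A)) : Prop := uRX m n r ∨ uRY m n r

/-- `uR^X_m = ∪_{n ≥ m} uR^X_{m,n}`. -/
def uRXm (m : ℕ) (r : List (RLetter A)) : Prop := ∃ n, m ≤ n ∧ uRX m n r

/-- `uR^Y_m = ∪_{n ≥ m} uR^Y_{m,n}`. -/
def uRYm (m : ℕ) (r : List (RLetter A)) : Prop := ∃ n, m ≤ n ∧ uRY m n r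

/-- `r = Z₁ ⋯ Z_n` is condensed on `u`: it is defined on `u` and there is a chain of
open intervals `(0;|u|+1) = (i₀;j₀) ⊃ (i₁;j₁) ⊃ ⋯ ⊃ (i_{n-1};j_{n-1}) ∋ r(u)`
updated according to the pairs `Z_ℓ Z_{ℓ+1}`. -/
def Condensed (u : List A) (r : List (RLetter A)) : Prop :=
  ∃ (p : ℕ) (i j : ℕ → ℕ),
    evalR u r = some p ∧
    i 0 = 0 ∧ j 0 = u.length + 1 ∧
    (∀ ℓ a b, 1 ≤ ℓ → r[ℓ-1]? = some (RLetter.X a) → r[ℓ]? = some (RLetter.X b) →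
        nextOcc u a (i (ℓ-1)) = some (i ℓ) ∧ j ℓ = j (ℓ-1)) ∧
    (∀ ℓ a b, 1 ≤ ℓ → r[ℓ-1]? = some (RLetter.Y a) → r[ℓ]? = some (RLetter.Y b) →
        i ℓ = i (ℓ-1) ∧ prevOcc u a (j (ℓ-1)) = some (j ℓ)) ∧
    (∀ ℓ a b, 1 ≤ ℓ → r[ℓ-1]? = some (RLetter.X a) → r[ℓ]? = some (RLetter.Y b) →
        i ℓ = i (ℓ-1) ∧ nextOcc u a (i (ℓ-1)) = some (j ℓ)) ∧
    (∀ ℓ a b, 1 ≤ ℓ → r[ℓ-1]? = some (RLetter.Y a) → r[ℓ]? = some (RLetter.X b) →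
        prevOcc u a (j (ℓ-1)) = some (i ℓ) ∧ j ℓ = j (ℓ-1)) ∧
    (∀ ℓ, 1 ≤ ℓ → ℓ < r.length →
        i (ℓ-1) ≤ i ℓ ∧ j ℓ ≤ j (ℓ-1) ∧ (i (ℓ-1) < i ℓ ∨ j ℓ < j (ℓ-1))) ∧
    i (r.length - 1) < p ∧ p < j (r.length - 1)

/-- `u` and `v` agree on rankers from the set `R`. -/
def AgreeDef (R : List (RLetter A) → Prop) (u v : List A) : Prop :=
  ∀ r, R r → (Defined u r ↔ Defined v r)

/-- `u` and `v` agree on condensed rankers from the set `R`. -/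
def AgreeCond (R : List (RLetter A) → Prop) (u v : List A) : Prop :=
  ∀ r, R r → (Condensed u r ↔ Condensed v r)

/-- `u ⊳_{m,n} v`. -/
def trir (m n : ℕ) (u v : List A) : Prop := AgreeCond (uRX m n) u v

/-- `u ⊲_{m,n} v`. -/
def tril (m n : ℕ) (u v : List A) : Prop := AgreeCond (uRY m n) u v

/-- The alphabet (set of letters) of a word. -/
def alph (u : List A) : Finset A := u.toFinset

/-- Condition (WI 1). -/
def WI1 (m n : ℕ) (u v : List A) : Prop := AgreeDef (uR m n) u v

/-- Condition (WI 2). -/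
def WI2 (m n : ℕ) (u v : List A) : Prop :=
  ∀ r r', uR m n r → uR (m-1) (n-1) r' →
    Defined u r → Defined v r → Defined u r' → Defined v r' →
    compare (pos u r) (pos u r') = compare (pos v r) (pos v r')

/-- Condition (WI 3). -/
def WI3 (m n : ℕ) (u v : List A) : Prop :=
  ∀ r r', uR m n r → uR m (n-1) r' →
    ((endsX r ∧ endsY r') ∨ (endsY r ∧ endsX r')) →
    Defined u r → Defined v r → Defined u r' → Defined v r' →
    compare (pos u r) (pos u r') = compare (pos v r) (pos v r')

/-- Condition (WI 1c). -/
def WI1c (m n : ℕ) (u v : List A) : Prop := AgreeCond (uR m n) u v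

/-- Condition (WI 2c). -/
def WI2c (m n : ℕ) (u v : List A) : Prop :=
  ∀ r r', uR m n r → uR (m-1) (n-1) r' →
    Condensed u r → Condensed v r → Condensed u r' → Condensed v r' →
    compare (pos u r) (pos u r') = compare (pos v r) (pos v r')

/-- Condition (WI 3c). -/
def WI3c (m n : ℕ) (u v : List A) : Prop :=
  ∀ r r', uR m n r → uR m (n-1) r' →
    ((endsX r ∧ endsY r') ∨ (endsY r ∧ endsX r')) →
    Condensed u r → Condensed v r → Condensed u r' → Condensed v r' →
    compare (pos u r) (pos u r') = compare (pos v r) (pos v r')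


/-!
Let `c` be the state reached by a condensed ranker `s`, and extend `s` by a letter `z`. If the
position `p` found by `z` stays inside the window, then `s ++ [z]` is condensed. Otherwise `z` does
not occur between the position of `c` and the far end of the window, so that `p` is also found by
searching for `z` from that far end on. The far end is then not a border of the word, so it was set
by an earlier letter of `s`, where the direction of the ranker changed: either it carries the letter
of `z`, and then it is `p` and the part of `s` before the change reaches `p`, or `s` can be cut
there and extended by `z` anew. Which case occurs only depends on letters and on whether subrankers
of `s ++ [z]` are condensed, so both words shorten the ranker in the same way.
-/

/-! ### Occurrences of letters -/

theorem getLast?_filter_range_eq_some_iff {P : ℕ → Bool} {N p : ℕ} :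
    ((List.range N).filter P).getLast? = some p ↔
      p < N ∧ P p = true ∧ ∀ k, p < k → k < N → P k = false := by
  induction N with
  | zero => simp
  | succ N ih =>
    rw [List.range_succ, List.filter_append, List.getLast?_append, List.filter_singleton]
    cases hN : P N
    · rw [cond_false, List.getLast?_nil, Option.none_or, ih]
      grind
    · rw [cond_true, List.getLast?_singleton, Option.some_or, Option.some_inj]
      grind

theorem nextOcc_eq_some_iff {u : List A} {a : A} {q p : ℕ} :
    nextOcc u a q = some p ↔
      q < p ∧ u[p - 1]? = some a ∧ ∀ k, q < k → k < p → u[k - 1]? ≠ some a := by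
  rw [nextOcc, List.head?_filter, List.find?_range_eq_some]
  grind

theorem prevOcc_eq_some_iff {u : List A} {a : A} {q p : ℕ} :
    prevOcc u a q = some p ↔
      (1 ≤ p ∧ p < q) ∧ u[p - 1]? = some a ∧ ∀ k, p < k → k < q → u[k - 1]? ≠ some a := by
  rw [prevOcc, getLast?_filter_range_eq_some_iff]
  grind

namespace RLetter

/-- The letter of `A` that a ranker letter searches for. -/
def letter : RLetter A → A
  | X a => a
  | Y a => a

/-- The interval obtained from `I` by moving to `q` the endpoint at which a search for `z` starts.
In the chain of intervals of a condensed ranker, `Z_ℓ Z_{ℓ+1}` turns the interval `I` into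
`Z_{ℓ+1}.cut q I`, where `q` is the position found by `Z_ℓ`. -/
def cut : RLetter A → ℕ → ℕ × ℕ → ℕ × ℕ
  | X _, q, I => (q, I.2)
  | Y _, q, I => (I.1, q)

/-- The endpoint of an interval at which a search for `z` starts. -/
def near : RLetter A → ℕ × ℕ → ℕ
  | X _, I => I.1
  | Y _, I => I.2

/-- The endpoint of an interval at which a search for `z` leaves it. -/
def far : RLetter A → ℕ × ℕ → ℕ
  | X _, I => I.2
  | Y _, I => I.1

/-- The position one step before `q` in the direction of `z`, so that a search for `z` started there
takes `q` itself into account. For an `X`-letter this is only meaningful when `1 ≤ q`. -/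
def back : RLetter A → ℕ → ℕ
  | X _, q => q - 1
  | Y _, q => q + 1

omit [DecidableEq A]

theorem near_cut (z : RLetter A) (q : ℕ) (I : ℕ × ℕ) : z.near (z.cut q I) = q := by
  cases z <;> rfl

theorem far_cut_eq_far_or_eq_pos (y z : RLetter A) :
    (∀ q I, z.far (y.cut q I) = z.far I) ∨ ∀ q I, z.far (y.cut q I) = q := by
  cases y <;> cases z <;> simp [far, cut]

theorem cut_startPos (u : List A) (z : RLetter A) :
    z.cut (startPos u z) (0, u.length + 1) = (0, u.length + 1) := by
  cases z <;> rfl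

theorem Ioo_cut_subset {I : ℕ × ℕ} {p : ℕ} (hp : p ∈ Set.Ioo I.1 I.2) (z : RLetter A) :
    Set.Ioo (z.cut p I).1 (z.cut p I).2 ⊆ Set.Ioo I.1 I.2 := by
  cases z with
  | X a => exact Set.Ioo_subset_Ioo_left hp.1.le
  | Y a => exact Set.Ioo_subset_Ioo_right hp.2.le

end RLetter

theorem getElem?_of_stepR_eq_some {u : List A} {z : RLetter A} {q p : ℕ}
    (h : stepR u z q = some p) : u[p - 1]? = some z.letter := by
  cases z with
  | X a => exact (nextOcc_eq_some_iff.1 h).2.1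
  | Y a => exact (prevOcc_eq_some_iff.1 h).2.1

theorem pos_bounds_of_stepR_eq_some {u : List A} {z : RLetter A} {q p : ℕ}
    (h : stepR u z q = some p) : 0 < p ∧ p < u.length + 1 := by
  have := getElem?_of_stepR_eq_some h
  cases z with
  | X a => grind [stepR, nextOcc_eq_some_iff]
  | Y a => grind [stepR, prevOcc_eq_some_iff]

theorem stepR_back_far_of_notMem {u : List A} {z : RLetter A} {I : ℕ × ℕ} {q p : ℕ}
    (h : stepR u z q = some p) (hq : q ∈ Set.Ioo I.1 I.2)
    (hp : p ∉ Set.Ioo (z.cut q I).1 (z.cut q I).2) :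
    stepR u z (z.back (z.far I)) = some p := by
  cases z with
  | X a =>
    simp only [stepR, RLetter.back, RLetter.far, RLetter.cut, nextOcc_eq_some_iff, Set.mem_Ioo] at *
    grind
  | Y a =>
    simp only [stepR, RLetter.back, RLetter.far, RLetter.cut, prevOcc_eq_some_iff, Set.mem_Ioo] at *
    grind

theorem stepR_back_of_eq {u : List A} {z : RLetter A} {q p : ℕ} (hq : 0 < q)
    (hz : u[q - 1]? = some z.letter) (h : stepR u z (z.back q) = some p) : p = q := by
  cases z with
  | X a =>
    simp only [stepR, RLetter.back, RLetter.letter, nextOcc_eq_some_iff] at *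
    grind
  | Y a =>
    simp only [stepR, RLetter.back, RLetter.letter, prevOcc_eq_some_iff] at *
    grind

theorem stepR_of_stepR_back {u : List A} {z : RLetter A} {q p : ℕ}
    (hz : u[q - 1]? ≠ some z.letter) (h : stepR u z (z.back q) = some p) :
    stepR u z q = some p := by
  cases z with
  | X a =>
    simp only [stepR, RLetter.back, RLetter.letter, nextOcc_eq_some_iff] at *
    grind
  | Y a =>
    simp only [stepR, RLetter.back, RLetter.letter, prevOcc_eq_some_iff] at *
    grind

theorem stepR_back_far_full (u : List A) (z : RLetter A) :
    stepR u z (z.back (z.far (0, u.length + 1))) = none := by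
  refine Option.eq_none_iff_forall_ne_some.2 fun p h => ?_
  have := pos_bounds_of_stepR_eq_some h
  cases z with
  | X a =>
    simp only [stepR, RLetter.back, RLetter.far, nextOcc_eq_some_iff] at h
    omega
  | Y a =>
    simp only [stepR, RLetter.back, RLetter.far, prevOcc_eq_some_iff] at h
    omega

/-! ### Condensed evaluation -/

/-- The state of a condensed evaluation: the current interval, as the pair of its endpoints, and the
position reached in it. -/
structure CondensedState where
  window : ℕ × ℕ
  pos : ℕ

/-- One step of a condensed evaluation: the current position becomes an endpoint of the window, and
the position found by `z` has to lie in the new window. -/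
def condensedStep (u : List A) (c : CondensedState) (z : RLetter A) : Option CondensedState :=
  (stepR u z c.pos).bind fun p =>
    if p ∈ Set.Ioo (z.cut c.pos c.window).1 (z.cut c.pos c.window).2 then
      some ⟨z.cut c.pos c.window, p⟩
    else none

/-- The final state of the condensed evaluation of a nonempty ranker, if there is one. A ranker is
condensed if and only if it has a condensed evaluation, see `condensed_iff_exists_condensedEval`. -/
def condensedEval (u : List A) : List (RLetter A) → Option CondensedState
  | [] => none
  | z :: r => (z :: r).foldlM (condensedStep u) ⟨(0, u.length + 1), startPos u z⟩

theorem condensedStep_eq_some_iff {u : List A} {z : RLetter A} {c d : CondensedState} :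
    condensedStep u c z = some d ↔
      stepR u z c.pos = some d.pos ∧ d.window = z.cut c.pos c.window ∧
        d.pos ∈ Set.Ioo d.window.1 d.window.2 := by
  obtain ⟨J, p⟩ := d
  simp only [condensedStep, Option.bind_eq_some_iff, Option.ite_none_right_eq_some,
    Option.some.injEq, CondensedState.mk.injEq]
  grind

theorem foldlM_condensedStep_cons_eq_some_iff {u : List A} {z : RLetter A} {r : List (RLetter A)}
    {c e : CondensedState} :
    (z :: r).foldlM (condensedStep u) c = some e ↔
      ∃ d, condensedStep u c z = some d ∧ r.foldlM (condensedStep u) d = some e := by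
  simp [Option.bind_eq_some_iff]

theorem ne_nil_of_condensedEval {u : List A} {r : List (RLetter A)} {c : CondensedState}
    (h : condensedEval u r = some c) : r ≠ [] := by
  rintro rfl
  cases h

theorem condensedEval_singleton {u : List A} {z : RLetter A} {c : CondensedState} :
    condensedEval u [z] = some c ↔
      c.window = (0, u.length + 1) ∧ stepR u z (startPos u z) = some c.pos := by
  simp only [condensedEval, foldlM_condensedStep_cons_eq_some_iff, List.foldlM_nil,
    Option.pure_def, Option.some.injEq, exists_eq_right, condensedStep_eq_some_iff,
    RLetter.cut_startPos]
  constructor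
  · exact fun h => ⟨h.2.1, h.1⟩
  · exact fun h => ⟨h.2, h.1, by rw [h.1]; exact pos_bounds_of_stepR_eq_some h.2⟩

theorem condensedEval_concat_eq_some_iff {u : List A} {r : List (RLetter A)} (hr : r ≠ [])
    {z : RLetter A} {d : CondensedState} :
    condensedEval u (r ++ [z]) = some d ↔
      ∃ c, condensedEval u r = some c ∧ condensedStep u c z = some d := by
  cases r with
  | nil => exact absurd rfl hr
  | cons y r =>
    rw [List.cons_append, condensedEval, condensedEval, ← List.cons_append, List.foldlM_append]
    simp [Option.bind_eq_some_iff]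

theorem pos_mem_window_of_condensedEval {u : List A} {r : List (RLetter A)} {c : CondensedState}
    (h : condensedEval u r = some c) : c.pos ∈ Set.Ioo c.window.1 c.window.2 := by
  cases r using List.reverseRecOn with
  | nil => cases h
  | append_singleton r z =>
    by_cases hr : r = []
    · subst hr
      obtain ⟨hw, hp⟩ := condensedEval_singleton.1 h
      exact hw ▸ pos_bounds_of_stepR_eq_some hp
    · obtain ⟨_, -, hd⟩ := (condensedEval_concat_eq_some_iff hr).1 h
      exact (condensedStep_eq_some_iff.1 hd).2.2

theorem evalFrom_of_foldlM_condensedStep {u : List A} {r : List (RLetter A)} {c d : CondensedState}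
    (h : r.foldlM (condensedStep u) c = some d) : evalFrom u r c.pos = some d.pos := by
  induction r generalizing c with
  | nil => cases h; rfl
  | cons z r ih =>
    obtain ⟨e, he, hd⟩ := foldlM_condensedStep_cons_eq_some_iff.1 h
    rw [evalFrom, (condensedStep_eq_some_iff.1 he).1, Option.bind_some, ih hd]

theorem evalR_of_condensedEval {u : List A} {r : List (RLetter A)} {c : CondensedState}
    (h : condensedEval u r = some c) : evalR u r = some c.pos := by
  cases r with
  | nil => cases h
  | cons z r => exact evalFrom_of_foldlM_condensedStep h

theorem evalFrom_concat (u : List A) (r : List (RLetter A)) (z : RLetter A) (q : ℕ) :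
    evalFrom u (r ++ [z]) q = (evalFrom u r q).bind (stepR u z) := by
  induction r generalizing q with
  | nil => simp [evalFrom]
  | cons y r ih => simp only [List.cons_append, evalFrom, Option.bind_assoc, ih]

theorem evalR_concat (u : List A) {r : List (RLetter A)} (hr : r ≠ []) (z : RLetter A) :
    evalR u (r ++ [z]) = (evalR u r).bind (stepR u z) := by
  cases r with
  | nil => exact absurd rfl hr
  | cons y r => exact evalFrom_concat u (y :: r) z _

theorem evalR_singleton (u : List A) (z : RLetter A) :
    evalR u [z] = stepR u z (startPos u z) := by
  simp [evalR, evalFrom]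

theorem getElem?_of_evalR_concat {u : List A} {r : List (RLetter A)} {z : RLetter A} {p : ℕ}
    (h : evalR u (r ++ [z]) = some p) : u[p - 1]? = some z.letter := by
  by_cases hr : r = []
  · subst hr
    exact getElem?_of_stepR_eq_some (evalR_singleton u z ▸ h)
  · rw [evalR_concat u hr, Option.bind_eq_some_iff] at h
    obtain ⟨q, -, hq⟩ := h
    exact getElem?_of_stepR_eq_some hq

theorem getElem?_eq_getElem?_of_evalR {u v : List A} {r : List (RLetter A)} {p p' : ℕ}
    (hu : evalR u r = some p) (hv : evalR v r = some p') : u[p - 1]? = v[p' - 1]? := by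
  cases r using List.reverseRecOn with
  | nil => cases hu
  | append_singleton r z =>
    rw [getElem?_of_evalR_concat hu, getElem?_of_evalR_concat hv]

/-! ### Condensed rankers and condensed evaluation -/

/-- `W` is a strictly decreasing chain of intervals, given by their endpoints, that follows the
updates prescribed by the pairs of consecutive letters of `r`. Indices start at `0`: the interval
`W ℓ` is the one in which the letter `r[ℓ]` is evaluated. -/
def IsWindowChain (u : List A) (r : List (RLetter A)) (W : ℕ → ℕ × ℕ) : Prop :=
  ∀ ℓ y z, r[ℓ]? = some y → r[ℓ + 1]? = some z →
    (∃ p, stepR u y (y.near (W ℓ)) = some p ∧ W (ℓ + 1) = z.cut p (W ℓ)) ∧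
      (W ℓ).1 ≤ (W (ℓ + 1)).1 ∧ (W (ℓ + 1)).2 ≤ (W ℓ).2 ∧
      ((W ℓ).1 < (W (ℓ + 1)).1 ∨ (W (ℓ + 1)).2 < (W ℓ).2)

theorem condensed_iff_exists_isWindowChain {u : List A} {r : List (RLetter A)} :
    Condensed u r ↔ ∃ p W, W 0 = (0, u.length + 1) ∧ evalR u r = some p ∧ IsWindowChain u r W ∧
      p ∈ Set.Ioo (W (r.length - 1)).1 (W (r.length - 1)).2 := by
  constructor
  · rintro ⟨p, i, j, hp, hi, hj, hXX, hYY, hXY, hYX, hlt, hmem⟩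
    refine ⟨p, fun ℓ => (i ℓ, j ℓ), by simp only [hi, hj], hp, fun ℓ y z hy hz => ⟨?_, ?_⟩, hmem⟩
    · simp only [RLetter.cut, Prod.ext_iff]
      cases y <;> cases z
      · exact ⟨_, (hXX (ℓ + 1) _ _ (by omega) hy hz).imp_right fun h => ⟨rfl, h⟩⟩
      · obtain ⟨h, h'⟩ := hXY (ℓ + 1) _ _ (by omega) hy hz
        exact ⟨_, h', h, rfl⟩
      · exact ⟨_, (hYX (ℓ + 1) _ _ (by omega) hy hz).imp_right fun h => ⟨rfl, h⟩⟩
      · obtain ⟨h, h'⟩ := hYY (ℓ + 1) _ _ (by omega) hy hz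
        exact ⟨_, h', h, rfl⟩
    · exact hlt (ℓ + 1) (by omega) (List.getElem?_eq_some_iff.1 hz).1
  · rintro ⟨p, W, hW, hp, hchain, hmem⟩
    refine ⟨p, fun ℓ => (W ℓ).1, fun ℓ => (W ℓ).2, hp, by simp only [hW], by simp only [hW],
      ?_, ?_, ?_, ?_, ?_, hmem⟩
    on_goal 5 =>
      rintro (_ | ℓ) hℓ hlen
      · cases hℓ
      exact (hchain ℓ _ _ (List.getElem?_eq_getElem (by omega)) (List.getElem?_eq_getElem hlen)).2
    all_goals
      rintro (_ | ℓ) a b hℓ hy hz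
      · cases hℓ
      obtain ⟨⟨q, hq, hW'⟩, -⟩ := hchain ℓ _ _ hy hz
      simpa [hW', RLetter.cut, stepR, RLetter.near] using hq

theorem isWindowChain_cons_cons {u : List A} {y z : RLetter A} {r : List (RLetter A)}
    {W : ℕ → ℕ × ℕ} :
    IsWindowChain u (y :: z :: r) W ↔
      ((∃ p, stepR u y (y.near (W 0)) = some p ∧ W 1 = z.cut p (W 0)) ∧
        (W 0).1 ≤ (W 1).1 ∧ (W 1).2 ≤ (W 0).2 ∧ ((W 0).1 < (W 1).1 ∨ (W 1).2 < (W 0).2)) ∧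
      IsWindowChain u (z :: r) fun ℓ => W (ℓ + 1) := by
  constructor
  · exact fun h => ⟨h 0 y z rfl rfl, fun ℓ => h (ℓ + 1)⟩
  · rintro ⟨h₀, h⟩ (_ | ℓ) y' z' hy hz
    · cases hy
      cases hz
      exact h₀
    · exact h ℓ y' z' hy hz

theorem pos_mem_cut_of_foldlM_condensedStep {u : List A} {z : RLetter A} {r : List (RLetter A)}
    {c d : CondensedState} (h : (z :: r).foldlM (condensedStep u) c = some d) :
    d.pos ∈ Set.Ioo (z.cut c.pos c.window).1 (z.cut c.pos c.window).2 := by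
  induction r generalizing c z with
  | nil =>
    obtain ⟨e, he, hd⟩ := foldlM_condensedStep_cons_eq_some_iff.1 h
    cases hd
    obtain ⟨-, hw, hp⟩ := condensedStep_eq_some_iff.1 he
    exact hw ▸ hp
  | cons y r ih =>
    obtain ⟨e, he, hd⟩ := foldlM_condensedStep_cons_eq_some_iff.1 h
    obtain ⟨-, hw, hp⟩ := condensedStep_eq_some_iff.1 he
    exact hw ▸ RLetter.Ioo_cut_subset hp y (ih hd)

theorem exists_foldlM_condensedStep_of_isWindowChain {u : List A} {z : RLetter A}
    {r : List (RLetter A)} {c : CondensedState} {W : ℕ → ℕ × ℕ} {p : ℕ}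
    (hW : W 0 = z.cut c.pos c.window) (hp : evalFrom u (z :: r) c.pos = some p)
    (hchain : IsWindowChain u (z :: r) W) (hmem : p ∈ Set.Ioo (W r.length).1 (W r.length).2) :
    ∃ d, (z :: r).foldlM (condensedStep u) c = some d := by
  simp only [foldlM_condensedStep_cons_eq_some_iff, condensedStep_eq_some_iff]
  induction r generalizing c z W with
  | nil =>
    obtain ⟨q, hq, hqp⟩ := Option.bind_eq_some_iff.1 hp
    obtain rfl : q = p := Option.some_inj.1 hqp
    exact ⟨⟨W 0, q⟩, ⟨W 0, q⟩, ⟨hq, hW, hmem⟩, rfl⟩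
  | cons y r ih =>
    obtain ⟨⟨⟨q, hq, hW₁⟩, hlo, hhi, hlt⟩, hchain⟩ := isWindowChain_cons_cons.1 hchain
    rw [hW, z.near_cut] at hq
    rw [evalFrom, hq, Option.bind_some] at hp
    obtain ⟨d, e, he, hd⟩ := ih (c := ⟨W 0, q⟩) hW₁ hp hchain hmem
    have hfold := foldlM_condensedStep_cons_eq_some_iff.2 ⟨e, condensedStep_eq_some_iff.2 he, hd⟩
    have hcut := pos_mem_cut_of_foldlM_condensedStep hfold
    refine ⟨d, ⟨W 0, q⟩, ⟨hq, hW, ?_⟩, hfold⟩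
    rw [hW₁] at hlo hhi hlt
    cases y <;> simp only [RLetter.cut, Set.mem_Ioo] at hlo hhi hlt hcut ⊢ <;> omega

theorem exists_isWindowChain_of_foldlM_condensedStep {u : List A} {z : RLetter A}
    {r : List (RLetter A)} {c d : CondensedState}
    (h : (z :: r).foldlM (condensedStep u) c = some d) :
    ∃ W : ℕ → ℕ × ℕ, W 0 = z.cut c.pos c.window ∧ IsWindowChain u (z :: r) W ∧
      W r.length = d.window := by
  induction r generalizing c z with
  | nil =>
    obtain ⟨e, he, hd⟩ := foldlM_condensedStep_cons_eq_some_iff.1 h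
    cases hd
    exact ⟨fun _ => d.window, (condensedStep_eq_some_iff.1 he).2.1, by simp [IsWindowChain], rfl⟩
  | cons y r ih =>
    obtain ⟨e, he, hd⟩ := foldlM_condensedStep_cons_eq_some_iff.1 h
    obtain ⟨hstep, hwindow, hmem⟩ := condensedStep_eq_some_iff.1 he
    obtain ⟨W, hW, hchain, hlast⟩ := ih hd
    refine ⟨fun ℓ => ℓ.casesOn e.window W, hwindow, isWindowChain_cons_cons.2
      ⟨⟨⟨e.pos, ?_, hW⟩, ?_⟩, hchain⟩, hlast⟩
    · exact hwindow ▸ (z.near_cut c.pos c.window).symm ▸ hstep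
    · change _ ≤ (W 0).1 ∧ (W 0).2 ≤ _ ∧ (_ < (W 0).1 ∨ (W 0).2 < _)
      rw [hW]
      cases y with
      | X a => exact ⟨hmem.1.le, le_rfl, .inl hmem.1⟩
      | Y a => exact ⟨le_rfl, hmem.2.le, .inr hmem.2⟩

theorem condensed_iff_exists_condensedEval {u : List A} {r : List (RLetter A)} :
    Condensed u r ↔ ∃ c, condensedEval u r = some c := by
  rw [condensed_iff_exists_isWindowChain]
  cases r with
  | nil => simp [evalR, condensedEval]
  | cons z r =>
    constructor
    · rintro ⟨p, W, hW, hp, hchain, hmem⟩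
      exact exists_foldlM_condensedStep_of_isWindowChain (hW.trans (z.cut_startPos u).symm) hp
        hchain hmem
    · rintro ⟨c, hc⟩
      obtain ⟨W, hW, hchain, hlast⟩ := exists_isWindowChain_of_foldlM_condensedStep hc
      refine ⟨c.pos, W, hW.trans (z.cut_startPos u), evalR_of_condensedEval hc, hchain, ?_⟩
      exact hlast.symm ▸ pos_mem_window_of_condensedEval hc

/-! ### Subrankers -/

/-- `s` is a subranker of `r` if it arises from `r` by deleting letters other than the first one. -/
def IsSubranker (s r : List (RLetter A)) : Prop := s.Sublist r ∧ s.head? = r.head?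

section

omit [DecidableEq A]

theorem IsSubranker.refl (r : List (RLetter A)) : IsSubranker r r :=
  ⟨.refl r, rfl⟩

theorem IsSubranker.trans {r s t : List (RLetter A)} (hrs : IsSubranker r s)
    (hst : IsSubranker s t) : IsSubranker r t :=
  ⟨hrs.1.trans hst.1, hrs.2.trans hst.2⟩

theorem IsSubranker.concat {s r : List (RLetter A)} (h : IsSubranker s r) (z : RLetter A) :
    IsSubranker (s ++ [z]) (r ++ [z]) :=
  ⟨h.1.append_right [z], by rw [List.head?_append, List.head?_append, h.2]⟩

theorem isSubranker_concat {r : List (RLetter A)} (hr : r ≠ []) (z : RLetter A) :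
    IsSubranker r (r ++ [z]) :=
  ⟨List.sublist_append_left r [z], (List.head?_append_of_ne_nil r hr).symm⟩

theorem numBlocks_cons_le_of_sublist {s r : List (RLetter A)} (h : s.Sublist r) (z : RLetter A) :
    numBlocks (z :: s) ≤ numBlocks (z :: r) := by
  induction h generalizing z with
  | slnil => exact le_rfl
  | @cons s r y _ ih =>
    refine (ih z).trans ?_
    cases r with
    | nil => simp [numBlocks]
    | cons x r =>
      cases z <;> cases y <;> cases x <;> simp [numBlocks, sameDir] <;> omega
  | cons_cons y _ ih => exact Nat.add_le_add_left (ih y) _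

theorem IsSubranker.exists_cons {s r : List (RLetter A)} {z : RLetter A}
    (h : IsSubranker s (z :: r)) : ∃ t, s = z :: t ∧ t.Sublist r := by
  obtain ⟨t, rfl⟩ := List.head?_eq_some_iff.1 h.2
  exact ⟨t, rfl, List.cons_sublist_cons.1 h.1⟩

theorem IsSubranker.numBlocks_le {s r : List (RLetter A)} (h : IsSubranker s r) :
    numBlocks s ≤ numBlocks r := by
  cases r with
  | nil => rw [List.sublist_nil.1 h.1]
  | cons z r =>
    obtain ⟨t, rfl, ht⟩ := h.exists_cons
    exact numBlocks_cons_le_of_sublist ht z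

theorem IsSubranker.startsX {s r : List (RLetter A)} (h : IsSubranker s r) (hr : startsX r) :
    startsX s := by
  obtain ⟨a, t, rfl⟩ := hr
  obtain ⟨t', rfl, -⟩ := h.exists_cons
  exact ⟨a, t', rfl⟩

theorem IsSubranker.startsY {s r : List (RLetter A)} (h : IsSubranker s r) (hr : startsY r) :
    startsY s := by
  obtain ⟨a, t, rfl⟩ := hr
  obtain ⟨t', rfl, -⟩ := h.exists_cons
  exact ⟨a, t', rfl⟩

theorem IsSubranker.uRX {s r : List (RLetter A)} {m n : ℕ} (h : IsSubranker s r)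
    (hr : uRX m n r) : uRX m n s := by
  rcases hr with ⟨_, _, hm, hn, rfl, rfl, hX⟩ | ⟨_, _, hm, hn, rfl, rfl, hY⟩
  · exact .inl ⟨_, _, h.numBlocks_le.trans hm, h.1.length_le.trans hn, rfl, rfl, h.startsX hX⟩
  · exact .inr ⟨_, _, h.numBlocks_le.trans_lt hm, h.1.length_le.trans_lt hn, rfl, rfl,
      h.startsY hY⟩

theorem IsSubranker.uRY {s r : List (RLetter A)} {m n : ℕ} (h : IsSubranker s r)
    (hr : uRY m n r) : uRY m n s := by
  rcases hr with ⟨_, _, hm, hn, rfl, rfl, hY⟩ | ⟨_, _, hm, hn, rfl, rfl, hX⟩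
  · exact .inl ⟨_, _, h.numBlocks_le.trans hm, h.1.length_le.trans hn, rfl, rfl, h.startsY hY⟩
  · exact .inr ⟨_, _, h.numBlocks_le.trans_lt hm, h.1.length_le.trans_lt hn, rfl, rfl,
      h.startsX hX⟩

end

/-! ### Replacing rankers by condensed subrankers -/

/-- Some subranker of `r` is condensed on both `u` and `v`, and it reaches the position `p` of `u`
and the position `p'` of `v`. -/
def HasCommonCondensedSubranker (u v : List A) (r : List (RLetter A)) (p p' : ℕ) : Prop :=
  ∃ s, IsSubranker s r ∧ Condensed u s ∧ Condensed v s ∧ evalR u s = some p ∧ evalR v s = some p'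

theorem HasCommonCondensedSubranker.mono {u v : List A} {s r : List (RLetter A)} {p p' : ℕ}
    (h : HasCommonCondensedSubranker u v s p p') (hsr : IsSubranker s r) :
    HasCommonCondensedSubranker u v r p p' :=
  h.imp fun _ ht => ⟨ht.1.trans hsr, ht.2⟩

theorem condensed_concat_iff {u : List A} {r : List (RLetter A)} {z : RLetter A}
    {c : CondensedState} {p : ℕ} (hc : condensedEval u r = some c)
    (hp : stepR u z c.pos = some p) :
    Condensed u (r ++ [z]) ↔ p ∈ Set.Ioo (z.cut c.pos c.window).1 (z.cut c.pos c.window).2 := by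
  simp only [condensed_iff_exists_condensedEval,
    condensedEval_concat_eq_some_iff (ne_nil_of_condensedEval hc), hc, condensedStep_eq_some_iff,
    Option.some_inj, exists_eq_left', hp]
  constructor
  · rintro ⟨d, rfl, hw, hd⟩
    exact hw ▸ hd
  · exact fun h => ⟨⟨_, p⟩, rfl, rfl, h⟩

theorem condensed_concat_or_stepR_back_far {u v : List A} {r : List (RLetter A)} {z : RLetter A}
    {c d : CondensedState} {p p' : ℕ}
    (hagree : Condensed u (r ++ [z]) ↔ Condensed v (r ++ [z]))
    (hc : condensedEval u r = some c) (hd : condensedEval v r = some d)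
    (hp : stepR u z c.pos = some p) (hp' : stepR v z d.pos = some p') :
    HasCommonCondensedSubranker u v (r ++ [z]) p p' ∨
      stepR u z (z.back (z.far c.window)) = some p ∧
        stepR v z (z.back (z.far d.window)) = some p' := by
  by_cases h : Condensed u (r ++ [z])
  · refine .inl ⟨r ++ [z], .refl _, h, hagree.1 h, ?_, ?_⟩
    · rw [evalR_concat u (ne_nil_of_condensedEval hc), evalR_of_condensedEval hc,
        Option.bind_some, hp]
    · rw [evalR_concat v (ne_nil_of_condensedEval hd), evalR_of_condensedEval hd,
        Option.bind_some, hp']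
  · have h' := mt hagree.2 h
    rw [condensed_concat_iff hc hp] at h
    rw [condensed_concat_iff hd hp'] at h'
    exact .inr ⟨stepR_back_far_of_notMem hp (pos_mem_window_of_condensedEval hc) h,
      stepR_back_far_of_notMem hp' (pos_mem_window_of_condensedEval hd) h'⟩

theorem hasCommonCondensedSubranker_of_stepR_back_far {u v : List A} {r : List (RLetter A)}
    {z : RLetter A} {c d : CondensedState} {p p' : ℕ}
    (hagree : ∀ s, IsSubranker s (r ++ [z]) → (Condensed u s ↔ Condensed v s))
    (hc : condensedEval u r = some c) (hd : condensedEval v r = some d)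
    (hp : stepR u z (z.back (z.far c.window)) = some p)
    (hp' : stepR v z (z.back (z.far d.window)) = some p') :
    HasCommonCondensedSubranker u v (r ++ [z]) p p' := by
  induction r using List.reverseRecOn generalizing c d with
  | nil => cases hc
  | append_singleton t y ih =>
    by_cases ht : t = []
    · subst ht
      rw [(condensedEval_singleton.1 hc).1, stepR_back_far_full] at hp
      cases hp
    obtain ⟨c₀, hc₀, hstep⟩ := (condensedEval_concat_eq_some_iff ht).1 hc
    obtain ⟨d₀, hd₀, hstep'⟩ := (condensedEval_concat_eq_some_iff ht).1 hd
    rw [(condensedStep_eq_some_iff.1 hstep).2.1] at hp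
    rw [(condensedStep_eq_some_iff.1 hstep').2.1] at hp'
    have hsub : IsSubranker (t ++ [z]) (t ++ [y] ++ [z]) := (isSubranker_concat ht y).concat z
    have hagree' : ∀ s, IsSubranker s (t ++ [z]) → (Condensed u s ↔ Condensed v s) :=
      fun s hs => hagree s (hs.trans hsub)
    rcases RLetter.far_cut_eq_far_or_eq_pos y z with hfar | hfar
    · rw [hfar] at hp hp'
      exact (ih hagree' hc₀ hd₀ hp hp').mono hsub
    rw [hfar] at hp hp'
    have hletter := getElem?_eq_getElem?_of_evalR (evalR_of_condensedEval hc₀)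
      (evalR_of_condensedEval hd₀)
    by_cases hz : u[c₀.pos - 1]? = some z.letter
    · have hc₀_pos := (pos_mem_window_of_condensedEval hc₀).1.pos
      have hd₀_pos := (pos_mem_window_of_condensedEval hd₀).1.pos
      obtain rfl := stepR_back_of_eq hc₀_pos hz hp
      obtain rfl := stepR_back_of_eq hd₀_pos (hletter ▸ hz) hp'
      exact ⟨t, (isSubranker_concat ht z).trans hsub,
        condensed_iff_exists_condensedEval.2 ⟨_, hc₀⟩,
        condensed_iff_exists_condensedEval.2 ⟨_, hd₀⟩,
        evalR_of_condensedEval hc₀, evalR_of_condensedEval hd₀⟩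
    · rcases condensed_concat_or_stepR_back_far (hagree _ hsub) hc₀ hd₀
        (stepR_of_stepR_back hz hp) (stepR_of_stepR_back (hletter ▸ hz) hp') with h | ⟨h, h'⟩
      · exact h.mono hsub
      · exact (ih hagree' hc₀ hd₀ h h').mono hsub

theorem hasCommonCondensedSubranker_of_evalR {u v : List A} {r : List (RLetter A)} {p p' : ℕ}
    (hagree : ∀ s, IsSubranker s r → (Condensed u s ↔ Condensed v s))
    (hp : evalR u r = some p) (hp' : evalR v r = some p') :
    HasCommonCondensedSubranker u v r p p' := by
  induction r using List.reverseRecOn generalizing p p' with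
  | nil => cases hp
  | append_singleton t z ih =>
    by_cases ht : t = []
    · subst ht
      have condensed_of_evalR {w : List A} {q : ℕ} (h : evalR w [z] = some q) : Condensed w [z] :=
        condensed_iff_exists_condensedEval.2
          ⟨⟨_, q⟩, condensedEval_singleton.2 ⟨rfl, evalR_singleton w z ▸ h⟩⟩
      exact ⟨[z], .refl _, condensed_of_evalR hp, condensed_of_evalR hp', hp, hp'⟩
    rw [evalR_concat _ ht, Option.bind_eq_some_iff] at hp hp'
    obtain ⟨q, hq, hp⟩ := hp
    obtain ⟨q', hq', hp'⟩ := hp'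
    obtain ⟨s, hst, hus, hvs, hsq, hsq'⟩ :=
      ih (fun s hs => hagree s (hs.trans (isSubranker_concat ht z))) hq hq'
    obtain ⟨c, hc⟩ := condensed_iff_exists_condensedEval.1 hus
    obtain ⟨d, hd⟩ := condensed_iff_exists_condensedEval.1 hvs
    obtain rfl : c.pos = q := Option.some_inj.1 ((evalR_of_condensedEval hc).symm.trans hsq)
    obtain rfl : d.pos = q' := Option.some_inj.1 ((evalR_of_condensedEval hd).symm.trans hsq')
    have hsub := hst.concat z
    rcases condensed_concat_or_stepR_back_far (hagree _ hsub) hc hd hp hp' with h | ⟨h, h'⟩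
    · exact h.mono hsub
    · exact (hasCommonCondensedSubranker_of_stepR_back_far
        (fun t ht => hagree t (ht.trans hsub)) hc hd h h').mono hsub

theorem statement6_general {u v : List A} {r : List (RLetter A)}
    (hagree : ∀ s, IsSubranker s r → (Condensed u s ↔ Condensed v s))
    (hu : Defined u r) (hv : Defined v r) :
    ∃ s, IsSubranker s r ∧ Condensed u s ∧ Condensed v s ∧
      evalR u s = evalR u r ∧ evalR v s = evalR v r := by
  obtain ⟨p, hp⟩ := Option.isSome_iff_exists.1 hu
  obtain ⟨p', hp'⟩ := Option.isSome_iff_exists.1 hv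
  rw [hp, hp']
  exact hasCommonCondensedSubranker_of_evalR hagree hp hp'

/-- If `u, v` agree on condensed rankers from `uR^Z_{m,n}` and
`r ∈ uR^Z_{m,n}` is defined on both, then some `r' ∈ uR^Z_{m,n}` is condensed on both
and coincides with `r` on both words. -/
theorem statement6 (m n : ℕ) (hm : 1 ≤ m) (hmn : m ≤ n)
    (ZR : ℕ → ℕ → List (RLetter A) → Prop) (hZR : ZR = uRX ∨ ZR = uRY)
    (u v : List A) (hu : u ≠ []) (hv : v ≠ [])
    (hagree : ∀ r, ZR m n r → (Condensed u r ↔ Condensed v r))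
    (r : List (RLetter A)) (hr : ZR m n r)
    (hdu : Defined u r) (hdv : Defined v r) :
    ∃ r', ZR m n r' ∧ Condensed u r' ∧ Condensed v r' ∧
      evalR u r' = evalR u r ∧ evalR v r' = evalR v r := by
  have hsub : ∀ s, IsSubranker s r → ZR m n s := by
    rcases hZR with rfl | rfl
    exacts [fun s hs => hs.uRX hr, fun s hs => hs.uRY hr]
  obtain ⟨s, hs, h⟩ := statement6_general (fun s hs => hagree s (hsub s hs)) hdu hdv
  exact ⟨s, hsub s hs, h⟩

end RankerPaper
end

section
/- Let n ≥ m ≥ 1, u, v ∈ A+ and Z ∈ {X,Y}. If u and v agree on condensed rankers from uR^Z_{m,n}, then u and v agree on rankers from uR^Z_{m,n}; that is, every ranker of uR^Z_{m,n} is defined on u if and only if it is defined on v. -/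
namespace RankerPaper

variable {A : Type*} [DecidableEq A]

/-! The proof works inside an open interval `(i; j)` of positions and is by induction on the depth
of rankers. Let `p` be the first `a`-position of the interval. A ranker `X_a X_b ⋯` is condensed on
`(i; j)` iff its tail is condensed on `(p; j)`, and `X_a Y_b ⋯` iff its tail is condensed on
`(i; p)`. A ranker `Y_b ⋯` is condensed on `(p; j)` iff it is condensed on `(i; j)` and its initial
`Y`-block stays to the right of `p`; the latter means that a certain subword occurs after `p`, that
is, that the block followed by `Y_a` is condensed on `(i; j)`. Likewise the initial block
`X_b ⋯ X_c` of a ranker on `(i; p)` stays to the left of `p` iff `X_a Y_c ⋯ Y_b` is condensed on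
`(i; j)`. So agreement on condensed rankers passes to the two intervals on either side of `p`, with
one letter less, and by induction the words agree there on all rankers.

Now evaluate a ranker beginning with `X_a`, starting from `p` after its first letter. As long as it
stays on one side of `p`, both words behave alike by induction. If it crosses `p`, say to the left
by a letter `Y_c`, then no `c` lies between `p` and the current position, so it arrives at `p` if
`c = a`, and otherwise at the position to which `Y_c` leads from `p`. In either case the evaluation
restarts from `p` with a shorter ranker. Rankers beginning with a `Y`-letter are handled by
reversing the order of positions. -/

section Bounds

variable {P : Type*} [LinearOrder P]

theorem head?_eq_some_iff_isLeast {l : List P} (hl : l.Pairwise (· < ·)) {p : P} :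
    l.head? = some p ↔ IsLeast {x | x ∈ l} p := by
  cases l with
  | nil => simp [IsLeast]
  | cons x t =>
    have hx : IsLeast {y | y ∈ x :: t} x :=
      ⟨by simp, fun y hy => (List.mem_cons.1 hy).elim
        (fun h => h.ge) fun h => ((List.pairwise_cons.1 hl).1 y h).le⟩
    simp only [List.head?_cons, Option.some.injEq]
    exact ⟨fun h => h ▸ hx, hx.unique⟩

theorem getLast?_eq_some_iff_isGreatest {l : List P} (hl : l.Pairwise (· < ·)) {p : P} :
    l.getLast? = some p ↔ IsGreatest {x | x ∈ l} p := by
  induction l using List.reverseRecOn with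
  | nil => simp [IsGreatest]
  | append_singleton t x =>
    have hx : IsGreatest {y | y ∈ t ++ [x]} x :=
      ⟨by simp, fun y hy => (List.mem_append.1 hy).elim
        (fun h => ((List.pairwise_append.1 hl).2.2 y h x (List.mem_singleton_self x)).le)
        fun h => (List.mem_singleton.1 h).le⟩
    simp only [List.getLast?_concat, Option.some.injEq]
    exact ⟨fun h => h ▸ hx, hx.unique⟩

end Bounds

section Letters

variable {α : Type*}

namespace RLetter

/-- The letter of opposite direction. Reversing the order of positions flips every letter. -/
def flip : RLetter α → RLetter α
  | .X a => .Y a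
  | .Y a => .X a

/-- The end of the interval `(i; j)` from which a letter starts searching. The other end is
`z.origin j i`. -/
def origin {P : Type*} (i j : P) : RLetter α → P
  | .X _ => i
  | .Y _ => j

theorem flip_involutive : Function.Involutive (flip : RLetter α → RLetter α) := by
  rintro (a | a) <;> rfl

end RLetter

open RLetter

theorem forall_ranker_iff_forall_map_flip {p : List (RLetter α) → Prop} :
    (∀ r, p r) ↔ ∀ r : List (RLetter α), p (r.map RLetter.flip) :=
  RLetter.flip_involutive.list_map.surjective.forall

theorem numBlocks_map_flip (r : List (RLetter α)) :
    numBlocks (r.map RLetter.flip) = numBlocks r := by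
  induction r with
  | nil => rfl
  | cons z t ih =>
    cases t with
    | nil => rfl
    | cons y t => cases z <;> cases y <;> simp_all [numBlocks, sameDir, RLetter.flip]

theorem numBlocks_X_cons_X (a b : α) (t : List (RLetter α)) :
    numBlocks (X a :: X b :: t) = numBlocks (X b :: t) := by
  simp [numBlocks, sameDir]

theorem numBlocks_X_cons_Y (a b : α) (t : List (RLetter α)) :
    numBlocks (X a :: Y b :: t) = numBlocks (Y b :: t) + 1 := by
  simp [numBlocks, sameDir, add_comm]

theorem numBlocks_le_cons (z : RLetter α) (t : List (RLetter α)) :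
    numBlocks t ≤ numBlocks (z :: t) := by
  cases t <;> simp [numBlocks]

theorem numBlocks_cons_le (z : RLetter α) (t : List (RLetter α)) :
    numBlocks (z :: t) ≤ numBlocks t + 1 := by
  cases t with
  | nil => simp [numBlocks]
  | cons y t => simp only [numBlocks]; split_ifs <;> omega

theorem numBlocks_cons_pos (z : RLetter α) (t : List (RLetter α)) : 0 < numBlocks (z :: t) := by
  induction t generalizing z with
  | nil => simp [numBlocks]
  | cons y t ih => exact (ih y).trans_le (numBlocks_le_cons z _)

theorem numBlocks_le_append_left (x t : List (RLetter α)) : numBlocks x ≤ numBlocks (x ++ t) := by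
  induction x with
  | nil => simp [numBlocks]
  | cons z x ih =>
    cases x with
    | nil => exact numBlocks_cons_pos z t
    | cons y x => simp only [List.cons_append, numBlocks] at ih ⊢; omega

theorem numBlocks_map_Y_le_one (s : List α) : numBlocks (s.map Y) ≤ 1 := by
  induction s with
  | nil => simp [numBlocks]
  | cons a s ih => cases s <;> simp_all [numBlocks, sameDir]

theorem exists_eq_map_X_append (r : List (RLetter α)) :
    ∃ (s : List α) (t : List (RLetter α)), r = s.map X ++ t ∧ ¬ startsX t := by
  induction r with
  | nil => exact ⟨[], [], rfl, by simp [startsX]⟩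
  | cons z r ih =>
    cases z with
    | Y a => exact ⟨[], _, rfl, by simp [startsX]⟩
    | X a =>
      obtain ⟨s, t, rfl, ht⟩ := ih
      exact ⟨a :: s, t, rfl, ht⟩

theorem startsX_map_flip (r : List (RLetter α)) :
    startsX (r.map RLetter.flip) ↔ startsY r := by
  rcases r with _ | ⟨a | a, t⟩ <;> simp [startsX, startsY, RLetter.flip]

theorem startsY_map_flip (r : List (RLetter α)) :
    startsY (r.map RLetter.flip) ↔ startsX r := by
  rcases r with _ | ⟨a | a, t⟩ <;> simp [startsX, startsY, RLetter.flip]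

theorem exists_eq_map_Y_append (r : List (RLetter α)) :
    ∃ (s : List α) (t : List (RLetter α)), r = s.map Y ++ t ∧ ¬ startsY t := by
  revert r
  rw [forall_ranker_iff_forall_map_flip]
  intro r
  obtain ⟨s, t, rfl, ht⟩ := exists_eq_map_X_append r
  exact ⟨s, t.map RLetter.flip, by simp [RLetter.flip], by rwa [startsY_map_flip]⟩

theorem exists_eq_append_cons_of_not {p : List α → Prop} (hnil : p []) {s : List α} (hs : ¬ p s) :
    ∃ x z t, s = x ++ z :: t ∧ p x ∧ ¬ p (x ++ [z]) := by
  induction s using List.reverseRecOn with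
  | nil => exact absurd hnil hs
  | append_singleton s z ih =>
    by_cases h : p s
    · exact ⟨s, z, [], rfl, h, hs⟩
    · obtain ⟨x, y, t, rfl, hx, hxy⟩ := ih h
      exact ⟨x, y, t ++ [z], by simp, hx, hxy⟩

theorem uRX_X_cons_iff {m n : ℕ} {a : α} {t : List (RLetter α)} :
    uRX m n (X a :: t) ↔ numBlocks (X a :: t) ≤ m ∧ t.length < n := by
  simp [uRX, RX, RY, startsX, startsY]

theorem uRX_Y_cons_iff {m n : ℕ} {a : α} {t : List (RLetter α)} :
    uRX m n (Y a :: t) ↔ numBlocks (Y a :: t) < m ∧ t.length + 1 < n := by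
  simp [uRX, RX, RY, startsX, startsY]

theorem uRX_map_Y {m n : ℕ} {s : List α} (hs : s ≠ []) (hm : 1 < m) (hn : s.length < n) :
    uRX m n (s.map Y) := by
  cases s with
  | nil => exact absurd rfl hs
  | cons a s =>
    exact uRX_Y_cons_iff.2 ⟨(numBlocks_map_Y_le_one (a :: s)).trans_lt hm, by simpa using hn⟩

theorem ne_nil_of_uRX {m n : ℕ} {r : List (RLetter α)} (h : uRX m n r) : r ≠ [] := by
  rintro rfl
  simp [uRX, RX, RY, startsX, startsY] at h

theorem pos_of_uRX {m n : ℕ} {r : List (RLetter α)} (h : uRX m n r) : 0 < m ∧ 0 < n := by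
  rcases r with _ | ⟨a | a, t⟩
  · exact absurd rfl (ne_nil_of_uRX h)
  · rw [uRX_X_cons_iff] at h
    exact ⟨(numBlocks_cons_pos _ _).trans_le h.1, h.2.pos⟩
  · rw [uRX_Y_cons_iff] at h
    exact ⟨h.1.pos, h.2.pos⟩

theorem uRX_map_flip {m n : ℕ} {r : List (RLetter α)} :
    uRX m n (r.map RLetter.flip) ↔ uRY m n r := by
  simp only [uRX, uRY, RX, RY, numBlocks_map_flip, List.length_map, startsX_map_flip,
    startsY_map_flip]

theorem uRY_X_cons_iff {m n : ℕ} {a : α} {t : List (RLetter α)} :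
    uRY m n (X a :: t) ↔ numBlocks (X a :: t) < m ∧ t.length + 1 < n := by
  simp [uRY, RX, RY, startsX, startsY]

theorem uRY_Y_cons_iff {m n : ℕ} {a : α} {t : List (RLetter α)} :
    uRY m n (Y a :: t) ↔ numBlocks (Y a :: t) ≤ m ∧ t.length < n := by
  simp [uRY, RX, RY, startsX, startsY]

theorem forall_uRX_iff_forall_uRY_map_flip {m n : ℕ} {p : List (RLetter α) → Prop} :
    (∀ r, uRX m n r → p r) ↔ ∀ r, uRY m n r → p (r.map RLetter.flip) := by
  rw [forall_ranker_iff_forall_map_flip]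
  simp only [uRX_map_flip]

theorem uRX_succ_succ_of_uRY {m n : ℕ} {r : List (RLetter α)} (h : uRY m n r) :
    uRX (m + 1) (n + 1) r := by
  rcases r with _ | ⟨a | a, t⟩
  · simp [uRY, RX, RY, startsX, startsY] at h
  · rw [uRY_X_cons_iff] at h; rw [uRX_X_cons_iff]; omega
  · rw [uRY_Y_cons_iff] at h; rw [uRX_Y_cons_iff]; omega

end Letters

section LabelledOrder

open RLetter

variable {α P : Type*} [LinearOrder P] {w : P → Option α}

/-- The positions after `q` labelled `a` by `w`. -/
def occAfter (w : P → Option α) (a : α) (q : P) : Set P := {x | q < x ∧ w x = some a}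

/-- The positions before `q` labelled `a` by `w`. -/
def occBefore (w : P → Option α) (a : α) (q : P) : Set P := {x | x < q ∧ w x = some a}

theorem exists_isLeast_occAfter [LocallyFiniteOrder P] {a : α} {q x : P}
    (hx : x ∈ occAfter w a q) : ∃ p ≤ x, IsLeast (occAfter w a q) p := by
  obtain ⟨p, ⟨hpx, hp⟩, hmin⟩ := Set.exists_min_image (Set.Iic x ∩ occAfter w a q) id
    ((Set.finite_Ioc q x).subset fun y hy => ⟨hy.2.1, hy.1⟩) ⟨x, le_rfl, hx⟩
  refine ⟨p, hpx, hp, fun y hy => ?_⟩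
  rcases le_total y x with hyx | hxy
  · exact hmin y ⟨hyx, hy⟩
  · exact hpx.trans hxy

theorem exists_isGreatest_occBefore [LocallyFiniteOrder P] {a : α} {q x : P}
    (hx : x ∈ occBefore w a q) : ∃ p, x ≤ p ∧ IsGreatest (occBefore w a q) p :=
  exists_isLeast_occAfter (P := Pᵒᵈ) (w := w ∘ OrderDual.ofDual) hx

/-- `IsStep w i j z q p`: from position `q`, the ranker letter `z` leads to position `p` of the
order labelled by `w`, without leaving the open interval `(i; j)`. Only the end of the interval
towards which `z` moves is tested, as `q` is to be thought of as lying in `[i; j]`. -/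
def IsStep (w : P → Option α) (i j : P) : RLetter α → P → P → Prop
  | .X a, q, p => IsLeast (occAfter w a q) p ∧ p < j
  | .Y a, q, p => IsGreatest (occBefore w a q) p ∧ i < p

theorem IsStep.unique {i j i' j' q p p' : P} {z : RLetter α} (h : IsStep w i j z q p)
    (h' : IsStep w i' j' z q p') : p = p' := by
  cases z with
  | X a => exact h.1.unique h'.1
  | Y a => exact h.1.unique h'.1

theorem IsStep.label_X {i j q p : P} {a : α} (h : IsStep w i j (.X a) q p) : w p = some a :=
  h.1.1.2

theorem IsStep.lt_X {i j q p : P} {a : α} (h : IsStep w i j (.X a) q p) : q < p :=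
  h.1.1.1

theorem IsStep.mono_left {i i' j q p : P} {z : RLetter α} (hi : i' ≤ i)
    (h : IsStep w i j z q p) : IsStep w i' j z q p := by
  cases z with
  | X a => exact h
  | Y a => exact ⟨h.1, hi.trans_lt h.2⟩

theorem IsStep.left_lt {i j q p : P} {z : RLetter α} (hq : i < q) (h : IsStep w i j z q p) :
    i < p := by
  cases z with
  | X a => exact hq.trans h.1.1.1
  | Y a => exact h.2

theorem isStep_dual {i j q p : P} {z : RLetter α} :
    IsStep (P := Pᵒᵈ) (w ∘ OrderDual.ofDual) (OrderDual.toDual j) (OrderDual.toDual i) z.flip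
      (OrderDual.toDual q) (OrderDual.toDual p) ↔ IsStep w i j z q p := by
  cases z <;> exact Iff.rfl

/-- `RunsTo w i j r q p`: evaluating the ranker `r` from `q` within the open interval `(i; j)`
ends at `p`. -/
def RunsTo (w : P → Option α) (i j : P) : List (RLetter α) → P → P → Prop
  | [], q, p => q = p
  | z :: t, q, p => ∃ x, IsStep w i j z q x ∧ RunsTo w i j t x p

/-- The ranker `r` can be evaluated from `q` within the open interval `(i; j)`. -/
def DefinedFrom (w : P → Option α) (i j q : P) (r : List (RLetter α)) : Prop :=
  ∃ p, RunsTo w i j r q p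

theorem RunsTo.unique {i j i' j' q p p' : P} {r : List (RLetter α)} (h : RunsTo w i j r q p)
    (h' : RunsTo w i' j' r q p') : p = p' := by
  induction r generalizing q with
  | nil => exact h.symm.trans h'
  | cons z r ih =>
    obtain ⟨x, hx, hxp⟩ := h
    obtain ⟨x', hx', hxp'⟩ := h'
    obtain rfl := hx.unique hx'
    exact ih hxp hxp'

theorem RunsTo.mono_left {i i' j q p : P} {r : List (RLetter α)} (hi : i' ≤ i)
    (h : RunsTo w i j r q p) : RunsTo w i' j r q p := by
  induction r generalizing q with
  | nil => exact h
  | cons z r ih => exact h.imp fun x hx => ⟨hx.1.mono_left hi, ih hx.2⟩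

theorem RunsTo.left_lt {i j q p : P} {r : List (RLetter α)} (hq : i < q)
    (h : RunsTo w i j r q p) : i < p := by
  induction r generalizing q with
  | nil => exact hq.trans_eq h
  | cons z r ih =>
    obtain ⟨x, hx, hxp⟩ := h
    exact ih (hx.left_lt hq) hxp

theorem runsTo_append_iff {i j q p : P} {x t : List (RLetter α)} :
    RunsTo w i j (x ++ t) q p ↔ ∃ q', RunsTo w i j x q q' ∧ RunsTo w i j t q' p := by
  induction x generalizing q with
  | nil => exact ⟨fun h => ⟨q, rfl, h⟩, fun ⟨_, h, h'⟩ => h ▸ h'⟩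
  | cons z x ih =>
    simp only [List.cons_append, RunsTo, ih]
    exact ⟨fun ⟨y, hy, q', h, h'⟩ => ⟨q', ⟨y, hy, h⟩, h'⟩,
      fun ⟨q', ⟨y, hy, h⟩, h'⟩ => ⟨y, hy, q', h, h'⟩⟩

theorem runsTo_dual {i j q p : P} {r : List (RLetter α)} :
    RunsTo (P := Pᵒᵈ) (w ∘ OrderDual.ofDual) (OrderDual.toDual j) (OrderDual.toDual i)
      (r.map RLetter.flip) (OrderDual.toDual q) (OrderDual.toDual p) ↔ RunsTo w i j r q p := by
  induction r generalizing q with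
  | nil => exact Iff.rfl
  | cons z r ih => exact exists_congr fun x => and_congr isStep_dual ih

theorem definedFrom_append_iff {i j q q' : P} {x t : List (RLetter α)}
    (hx : RunsTo w i j x q q') :
    DefinedFrom w i j q (x ++ t) ↔ DefinedFrom w i j q' t := by
  simp only [DefinedFrom, runsTo_append_iff]
  constructor
  · rintro ⟨p, y, hy, hp⟩
    exact ⟨p, hx.unique hy ▸ hp⟩
  · rintro ⟨p, hp⟩
    exact ⟨p, q', hx, hp⟩

theorem DefinedFrom.of_append {i j q : P} {x t : List (RLetter α)}
    (h : DefinedFrom w i j q (x ++ t)) : DefinedFrom w i j q x := by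
  obtain ⟨p, hp⟩ := h
  obtain ⟨q', hx, -⟩ := runsTo_append_iff.1 hp
  exact ⟨q', hx⟩

theorem definedFrom_cons_iff {i j q : P} {z : RLetter α} {t : List (RLetter α)} :
    DefinedFrom w i j q (z :: t) ↔ ∃ p, IsStep w i j z q p ∧ DefinedFrom w i j p t :=
  ⟨fun ⟨x, p, hp, h⟩ => ⟨p, hp, x, h⟩, fun ⟨p, hp, x, h⟩ => ⟨x, p, hp, h⟩⟩

theorem definedFrom_dual {i j q : P} {r : List (RLetter α)} :
    DefinedFrom (P := Pᵒᵈ) (w ∘ OrderDual.ofDual) (OrderDual.toDual j) (OrderDual.toDual i)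
      (OrderDual.toDual q) (r.map RLetter.flip) ↔ DefinedFrom w i j q r :=
  exists_congr fun _ => runsTo_dual

/-- The ranker `r`, started at the appropriate end of the open interval `(i; j)`, can be
evaluated within that interval. The empty ranker is allowed here. -/
def DefinedOn (w : P → Option α) (i j : P) : List (RLetter α) → Prop
  | [] => True
  | z :: t => DefinedFrom w i j (z.origin i j) (z :: t)

theorem definedOn_dual {i j : P} {r : List (RLetter α)} :
    DefinedOn (P := Pᵒᵈ) (w ∘ OrderDual.ofDual) (OrderDual.toDual j) (OrderDual.toDual i)
      (r.map RLetter.flip) ↔ DefinedOn w i j r := by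
  rcases r with _ | ⟨a | a, t⟩
  · exact Iff.rfl
  all_goals exact definedFrom_dual (r := _ :: t)

/-- `CondensedFrom w i q j r`: the ranker `r`, started at `q`, is condensed, where the current
interval is `(q; j)` if `r` starts with an `X`-letter and `(i; q)` if it starts with a
`Y`-letter. Deciding which side of `q` to keep only when the next letter is known amounts to the
four update rules for pairs of consecutive letters. -/
def CondensedFrom (w : P → Option α) : P → P → P → List (RLetter α) → Prop
  | _, _, _, [] => True
  | i, q, j, .X a :: t => ∃ p, IsStep w i j (.X a) q p ∧ CondensedFrom w q p j t
  | i, q, j, .Y a :: t => ∃ p, IsStep w i j (.Y a) q p ∧ CondensedFrom w i p q t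

/-- The ranker `r` is condensed on the factor of `w` in the open interval `(i; j)`. The empty
ranker is allowed here. -/
def CondensedOn (w : P → Option α) (i j : P) : List (RLetter α) → Prop
  | [] => True
  | z :: t => CondensedFrom w i (z.origin i j) j (z :: t)

theorem condensedFrom_dual {i q j : P} {r : List (RLetter α)} :
    CondensedFrom (P := Pᵒᵈ) (w ∘ OrderDual.ofDual) (OrderDual.toDual j) (OrderDual.toDual q)
      (OrderDual.toDual i) (r.map RLetter.flip) ↔ CondensedFrom w i q j r := by
  induction r generalizing i q j with
  | nil => exact Iff.rfl
  | cons z r ih =>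
    cases z with
    | X a => exact exists_congr fun p => and_congr Iff.rfl ih
    | Y a => exact exists_congr fun p => and_congr Iff.rfl ih

theorem condensedOn_dual {i j : P} {r : List (RLetter α)} :
    CondensedOn (P := Pᵒᵈ) (w ∘ OrderDual.ofDual) (OrderDual.toDual j) (OrderDual.toDual i)
      (r.map RLetter.flip) ↔ CondensedOn w i j r := by
  rcases r with _ | ⟨a | a, t⟩
  · exact Iff.rfl
  all_goals exact condensedFrom_dual (r := _ :: t)

theorem CondensedFrom.mono_left {i i' q j : P} {r : List (RLetter α)} (hi : i' ≤ i)
    (h : CondensedFrom w i q j r) : CondensedFrom w i' q j r := by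
  induction r generalizing i i' q j with
  | nil => trivial
  | cons z r ih =>
    cases z with
    | X a => exact h
    | Y a =>
      obtain ⟨p, hp, hr⟩ := h
      exact ⟨p, hp.mono_left hi, ih hi hr⟩

theorem CondensedFrom.mono_right {i q j j' : P} {r : List (RLetter α)} (hj : j ≤ j')
    (h : CondensedFrom w i q j r) : CondensedFrom w i q j' r :=
  condensedFrom_dual.1 ((condensedFrom_dual.2 h).mono_left (OrderDual.toDual_le_toDual.2 hj))

theorem CondensedFrom.of_append {i q j : P} {x t : List (RLetter α)}
    (h : CondensedFrom w i q j (x ++ t)) : CondensedFrom w i q j x := by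
  induction x generalizing i q j with
  | nil => trivial
  | cons z x ih =>
    cases z with
    | X a => exact h.imp fun p hp => ⟨hp.1, ih hp.2⟩
    | Y a => exact h.imp fun p hp => ⟨hp.1, ih hp.2⟩

theorem CondensedFrom.map_Y_append {i i' q j : P} {s : List α} {t : List (RLetter α)}
    (hs : CondensedFrom w i q j (s.map Y)) (h : CondensedFrom w i' q j (s.map Y ++ t))
    (ht : ¬ startsY t) : CondensedFrom w i q j (s.map Y ++ t) := by
  induction s generalizing q j with
  | nil =>
    rcases t with _ | ⟨a | a, t⟩
    · trivial
    · exact h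
    · exact absurd ⟨a, t, rfl⟩ ht
  | cons b s ih =>
    rw [List.map_cons] at hs h ⊢
    obtain ⟨p, hp, hs⟩ := hs
    obtain ⟨p', hp', h⟩ := h
    obtain rfl := hp.unique hp'
    exact ⟨p, hp, ih hs h⟩

theorem CondensedFrom.map_X_append {i q j j' : P} {s : List α} {t : List (RLetter α)}
    (hs : CondensedFrom w i q j (s.map X)) (h : CondensedFrom w i q j' (s.map X ++ t))
    (ht : ¬ startsX t) : CondensedFrom w i q j (s.map X ++ t) := by
  rw [← condensedFrom_dual, List.map_append, List.map_map] at h ⊢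
  rw [← condensedFrom_dual, List.map_map] at hs
  exact CondensedFrom.map_Y_append hs h (mt (startsY_map_flip t).1 ht)

/-- The letters of `s` occur in this order at increasing positions of the interval `(i; j)`. -/
def OccursIn (w : P → Option α) (i j : P) (s : List α) : Prop :=
  ∃ l : List P, l.Pairwise (· < ·) ∧ (∀ x ∈ l, x ∈ Set.Ioo i j) ∧ l.map w = s.map some

theorem occursIn_cons_iff {i j : P} {a : α} {s : List α} :
    OccursIn w i j (a :: s) ↔ ∃ p ∈ Set.Ioo i j, w p = some a ∧ OccursIn w p j s := by
  constructor
  · rintro ⟨_ | ⟨p, l⟩, hl, hmem, hmap⟩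
    · simp at hmap
    · simp only [List.map_cons, List.cons.injEq] at hmap
      rw [List.forall_mem_cons] at hmem
      rw [List.pairwise_cons] at hl
      exact ⟨p, hmem.1, hmap.1, l, hl.2, fun x hx => ⟨hl.1 x hx, (hmem.2 x hx).2⟩, hmap.2⟩
  · rintro ⟨p, hp, hpa, l, hl, hmem, hmap⟩
    refine ⟨p :: l, List.pairwise_cons.2 ⟨fun x hx => (hmem x hx).1, hl⟩, ?_, by simp [hpa, hmap]⟩
    exact List.forall_mem_cons.2 ⟨hp, fun x hx => ⟨hp.1.trans (hmem x hx).1, (hmem x hx).2⟩⟩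

theorem OccursIn.mono_left {i i' j : P} {s : List α} (hi : i' ≤ i) (h : OccursIn w i j s) :
    OccursIn w i' j s :=
  h.imp fun _ hl => ⟨hl.1, fun x hx => ⟨hi.trans_lt (hl.2.1 x hx).1, (hl.2.1 x hx).2⟩, hl.2.2⟩

theorem OccursIn.dual {i j : P} {s : List α} (h : OccursIn w i j s) :
    OccursIn (P := Pᵒᵈ) (w ∘ OrderDual.ofDual) (OrderDual.toDual j) (OrderDual.toDual i)
      s.reverse := by
  obtain ⟨l, hl, hmem, hmap⟩ := h
  refine ⟨(l.map OrderDual.toDual).reverse, ?_, ?_, ?_⟩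
  · exact List.pairwise_reverse.2 (List.pairwise_map.2 hl)
  · simpa [and_comm] using hmem
  · rw [List.map_reverse, List.map_map, List.map_reverse, ← hmap]
    rfl

theorem occursIn_dual {i j : P} {s : List α} :
    OccursIn (P := Pᵒᵈ) (w ∘ OrderDual.ofDual) (OrderDual.toDual j) (OrderDual.toDual i)
      s.reverse ↔ OccursIn w i j s :=
  ⟨fun h => List.reverse_reverse s ▸ h.dual, OccursIn.dual⟩

theorem condensedFrom_map_X_iff [LocallyFiniteOrder P] {i q j : P} {s : List α} :
    CondensedFrom w i q j (s.map X) ↔ OccursIn w q j s := by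
  induction s generalizing i q with
  | nil => exact iff_of_true trivial ⟨[], .nil, by simp, rfl⟩
  | cons a s ih =>
    rw [occursIn_cons_iff, List.map_cons]
    constructor
    · rintro ⟨p, ⟨hp, hpj⟩, hs⟩
      exact ⟨p, ⟨hp.1.1, hpj⟩, hp.1.2, ih.1 hs⟩
    · rintro ⟨x, ⟨hqx, hxj⟩, hxa, hs⟩
      obtain ⟨p, hpx, hp⟩ := exists_isLeast_occAfter ⟨hqx, hxa⟩
      exact ⟨p, ⟨hp, hpx.trans_lt hxj⟩, ih.2 (hs.mono_left hpx)⟩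

theorem condensedFrom_map_Y_iff [LocallyFiniteOrder P] {i q j : P} {s : List α} :
    CondensedFrom w i q j (s.map Y) ↔ OccursIn w i q s.reverse := by
  rw [← condensedFrom_dual, ← occursIn_dual, List.reverse_reverse, List.map_map]
  exact condensedFrom_map_X_iff

theorem condensedOn_singleton_iff {i j : P} {z : RLetter α} :
    CondensedOn w i j [z] ↔ ∃ p, IsStep w i j z (z.origin i j) p := by
  cases z <;> exact exists_congr fun _ => and_iff_left trivial

theorem condensedOn_cons_cons_iff {i j : P} {z y : RLetter α} {t : List (RLetter α)} :
    CondensedOn w i j (z :: y :: t) ↔ ∃ p, IsStep w i j z (z.origin i j) p ∧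
      CondensedOn w (y.origin p i) (y.origin j p) (y :: t) := by
  cases z <;> cases y <;> exact Iff.rfl

theorem lt_of_condensedOn_cons {i j : P} {z : RLetter α} {t : List (RLetter α)}
    (h : CondensedOn w i j (z :: t)) : i < j := by
  cases z with
  | X a =>
    obtain ⟨p, hp, -⟩ := h
    exact hp.lt_X.trans hp.2
  | Y a =>
    obtain ⟨p, hp, -⟩ := h
    exact hp.2.trans hp.1.1.1

theorem occursIn_cons_iff_of_isStep {i j p : P} {a : α} {s : List α}
    (hp : IsStep w i j (X a) i p) : OccursIn w i j (a :: s) ↔ OccursIn w p j s := by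
  rw [occursIn_cons_iff]
  constructor
  · rintro ⟨x, hx, hxa, hs⟩
    exact hs.mono_left (hp.1.2 ⟨hx.1, hxa⟩)
  · exact fun hs => ⟨p, ⟨hp.lt_X, hp.2⟩, hp.label_X, hs⟩

end LabelledOrder

section Restriction

open RLetter

variable {α P : Type*} [LinearOrder P] [LocallyFiniteOrder P] {w w' : P → Option α}
  {i j p i' j' p' : P} {a : α} {m n : ℕ}

theorem condensedOn_map_Y_iff {s : List α} :
    CondensedOn w i j (s.map Y) ↔ OccursIn w i j s.reverse := by
  cases s with
  | nil => exact iff_of_true trivial ⟨[], .nil, by simp, rfl⟩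
  | cons b s => exact condensedFrom_map_Y_iff (s := b :: s)

theorem occursIn_right_of_isStep (hp : IsStep w i j (X a) i p)
    (hp' : IsStep w' i' j' (X a) i' p')
    (h : ∀ r, uRX m (n + 1) r → CondensedOn w i j r → CondensedOn w' i' j' r) (hm : 1 < m)
    {s : List α} (hn : s.length < n) (hs : OccursIn w p j s) : OccursIn w' p' j' s := by
  have hY := h ((a :: s).reverse.map Y) (uRX_map_Y (by simp) hm (by simpa using hn))
  rw [condensedOn_map_Y_iff, condensedOn_map_Y_iff, List.reverse_reverse,
    occursIn_cons_iff_of_isStep hp, occursIn_cons_iff_of_isStep hp'] at hY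
  exact hY hs

theorem condensedOn_right_of_isStep (hp : IsStep w i j (X a) i p)
    (hp' : IsStep w' i' j' (X a) i' p')
    (h : ∀ r, uRX m (n + 1) r → CondensedOn w i j r → CondensedOn w' i' j' r)
    {r : List (RLetter α)} (hr : uRX m n r) (hc : CondensedOn w p j r) :
    CondensedOn w' p' j' r := by
  rcases r with _ | ⟨b | b, t⟩
  · trivial
  · rw [uRX_X_cons_iff] at hr
    obtain ⟨q, hq, hqt⟩ := h (X a :: X b :: t)
      (uRX_X_cons_iff.2 ⟨numBlocks_X_cons_X a b t ▸ hr.1, Nat.succ_lt_succ hr.2⟩)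
      ⟨p, hp, hc⟩
    obtain rfl := hq.unique hp'
    exact hqt
  · rw [uRX_Y_cons_iff] at hr
    have hc' : CondensedOn w' i' j' (Y b :: t) :=
      h _ (uRX_Y_cons_iff.2 ⟨hr.1, hr.2.trans n.lt_succ_self⟩) (hc.mono_left hp.lt_X.le)
    obtain ⟨s, t, rfl, ht⟩ := exists_eq_map_Y_append t
    have hm : 1 < m := Nat.lt_of_le_of_lt (numBlocks_cons_pos _ _) hr.1
    have hn : (b :: s).reverse.length < n := by simp at hr ⊢; omega
    have hocc : OccursIn w p j (b :: s).reverse :=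
      condensedFrom_map_Y_iff.1 (CondensedFrom.of_append (x := (b :: s).map Y) hc)
    exact CondensedFrom.map_Y_append
      (condensedFrom_map_Y_iff.2 (occursIn_right_of_isStep hp hp' h hm hn hocc)) hc' ht

theorem occursIn_left_of_isStep (hp : IsStep w i j (X a) i p)
    (hp' : IsStep w' i' j' (X a) i' p')
    (h : ∀ r, uRX (m + 1) (n + 1) r → CondensedOn w i j r → CondensedOn w' i' j' r) (hm : 0 < m)
    {s : List α} (hn : s.length ≤ n) (hs : OccursIn w i p s) : OccursIn w' i' p' s := by
  have hblocks : numBlocks (X a :: s.reverse.map Y) ≤ m + 1 :=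
    (numBlocks_cons_le _ _).trans (Nat.succ_le_succ ((numBlocks_map_Y_le_one _).trans hm))
  obtain ⟨q, hq, hY⟩ := h (X a :: s.reverse.map Y)
    (uRX_X_cons_iff.2 ⟨hblocks, by simpa using Nat.lt_succ_of_le hn⟩)
    ⟨p, hp, condensedFrom_map_Y_iff.2 ((List.reverse_reverse s).symm ▸ hs)⟩
  obtain rfl := hq.unique hp'
  exact List.reverse_reverse s ▸ condensedFrom_map_Y_iff.1 hY

theorem condensedOn_left_of_isStep (hp : IsStep w i j (X a) i p)
    (hp' : IsStep w' i' j' (X a) i' p')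
    (h : ∀ r, uRX (m + 1) (n + 1) r → CondensedOn w i j r → CondensedOn w' i' j' r)
    {r : List (RLetter α)} (hr : uRY m n r) (hc : CondensedOn w i p r) :
    CondensedOn w' i' p' r := by
  rcases r with _ | ⟨b | b, t⟩
  · trivial
  · rw [uRY_X_cons_iff] at hr
    have hc' : CondensedOn w' i' j' (X b :: t) :=
      h _ (uRX_X_cons_iff.2 (by omega)) (hc.mono_right hp.2.le)
    obtain ⟨s, t, rfl, ht⟩ := exists_eq_map_X_append t
    have hm : 0 < m := hr.1.pos
    have hn : (b :: s).length ≤ n := by simp at hr ⊢; omega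
    have hocc : OccursIn w i p (b :: s) :=
      condensedFrom_map_X_iff.1 (CondensedFrom.of_append (x := (b :: s).map X) hc)
    exact CondensedFrom.map_X_append
      (condensedFrom_map_X_iff.2 (occursIn_left_of_isStep hp hp' h hm hn hocc)) hc' ht
  · rw [uRY_Y_cons_iff] at hr
    obtain ⟨q, hq, hqt⟩ := h (X a :: Y b :: t)
      (uRX_X_cons_iff.2 ⟨numBlocks_X_cons_Y a b t ▸ Nat.succ_le_succ hr.1,
        Nat.succ_lt_succ hr.2⟩) ⟨p, hp, hc⟩
    obtain rfl := hq.unique hp'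
    exact hqt

end Restriction

section Crossing

open RLetter

variable {α P : Type*} [LinearOrder P] {w w' : P → Option α} {i j p q i' j' p' q' : P} {a b c : α}
  {x s t : List (RLetter α)} {k l n : ℕ}

theorem not_definedFrom_append_X (hip : i ≤ p) (hx : RunsTo w p j x p q)
    (hxc : ¬ DefinedFrom w p j p (x ++ [X c])) : ¬ DefinedFrom w i j p (x ++ X c :: t) := by
  rw [definedFrom_append_iff hx] at hxc
  rw [definedFrom_append_iff (hx.mono_left hip)]
  exact fun ⟨_, y, hy, _⟩ => hxc ⟨y, y, hy, rfl⟩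

theorem RunsTo.lt_of_X_cons (h : RunsTo w p j (X b :: x) p q) : p < q := by
  obtain ⟨y, hy, hyq⟩ := h
  exact hyq.left_lt hy.lt_X

theorem le_of_mem_occBefore_of_not_definedFrom [LocallyFiniteOrder P]
    (h : ¬ DefinedFrom w p j q [Y c]) {y : P} (hy : y ∈ occBefore w c q) : y ≤ p := by
  obtain ⟨z, hyz, hz⟩ := exists_isGreatest_occBefore hy
  by_contra! hpy
  exact h ⟨z, z, ⟨hz, hpy.trans_le hyz⟩, rfl⟩

theorem definedFrom_Y_cons_iff_tail (hp : w p = some a) (hip : i < p) (hpq : p < q)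
    (h : ∀ y ∈ occBefore w a q, y ≤ p) :
    DefinedFrom w i j q (Y a :: t) ↔ DefinedFrom w i j p t := by
  have hstep : IsStep w i j (Y a) q p := ⟨⟨⟨hpq, hp⟩, h⟩, hip⟩
  rw [definedFrom_cons_iff]
  exact ⟨fun ⟨y, hy, ht⟩ => hstep.unique hy ▸ ht, fun ht => ⟨p, hstep, ht⟩⟩

theorem definedFrom_Y_cons_iff_of_ne (hp : w p = some a) (hca : c ≠ a) (hpq : p < q)
    (h : ∀ y ∈ occBefore w c q, y ≤ p) :
    DefinedFrom w i j q (Y c :: t) ↔ DefinedFrom w i j p (Y c :: t) := by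
  have hocc : occBefore w c q = occBefore w c p := by
    ext y
    refine ⟨fun hy => ⟨(h y hy).lt_of_ne ?_, hy.2⟩, fun hy => ⟨hy.1.trans hpq, hy.2⟩⟩
    rintro rfl
    exact hca (Option.some_injective α (hy.2.symm.trans hp))
  simp only [definedFrom_cons_iff, IsStep, hocc]

theorem definedFrom_Y_cons_congr [LocallyFiniteOrder P] (hp : w p = some a)
    (hp' : w' p' = some a) (hip : i < p) (hip' : i' < p') (hpq : p < q) (hpq' : p' < q')
    (h : ¬ DefinedFrom w p j q [Y c]) (h' : ¬ DefinedFrom w' p' j' q' [Y c])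
    (ht : DefinedFrom w i j p t ↔ DefinedFrom w' i' j' p' t)
    (hct : DefinedFrom w i j p (Y c :: t) ↔ DefinedFrom w' i' j' p' (Y c :: t)) :
    DefinedFrom w i j q (Y c :: t) ↔ DefinedFrom w' i' j' q' (Y c :: t) := by
  have hle := fun y => le_of_mem_occBefore_of_not_definedFrom (y := y) h
  have hle' := fun y => le_of_mem_occBefore_of_not_definedFrom (y := y) h'
  by_cases hca : c = a
  · subst hca
    rwa [definedFrom_Y_cons_iff_tail hp hip hpq hle,
      definedFrom_Y_cons_iff_tail hp' hip' hpq' hle']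
  · rwa [definedFrom_Y_cons_iff_of_ne hp hca hpq hle,
      definedFrom_Y_cons_iff_of_ne hp' hca hpq' hle']

/-- Rankers of length at most `n`, with at most `k` blocks if the first one is an `X`-block and
at most `l` blocks if it is a `Y`-block. If `k` and `l` differ by at most one, this class is
closed under suffixes. -/
def BlockBounded (k l n : ℕ) (s : List (RLetter α)) : Prop :=
  s.length ≤ n ∧ (startsX s → numBlocks s ≤ k) ∧ (startsY s → numBlocks s ≤ l)

theorem blockBounded_map_flip :
    BlockBounded l k n (s.map RLetter.flip) ↔ BlockBounded k l n s := by
  simp only [BlockBounded, List.length_map, numBlocks_map_flip, startsX_map_flip,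
    startsY_map_flip, and_comm (a := startsY s → _)]

theorem BlockBounded.tail {z : RLetter α} (hkl : k ≤ l + 1) (hlk : l ≤ k + 1)
    (h : BlockBounded k l n (z :: t)) : BlockBounded k l n t := by
  obtain ⟨hn, hX, hY⟩ := h
  rcases z with a | a <;> rcases t with _ | ⟨b | b, t⟩ <;>
    simp [BlockBounded, startsX, startsY, numBlocks, sameDir] at * <;> omega

theorem BlockBounded.of_append (hkl : k ≤ l + 1) (hlk : l ≤ k + 1)
    (h : BlockBounded k l n (x ++ t)) : BlockBounded k l n t := by
  induction x with
  | nil => exact h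
  | cons z x ih => exact ih (h.tail hkl hlk)

theorem definedFrom_prefix_iff (hR : ∀ r, uRX k n r → (DefinedOn w p j r ↔ DefinedOn w' p' j' r))
    (hs : BlockBounded k l n (X b :: s)) (hxt : X b :: s = x ++ t) :
    DefinedFrom w p j p x ↔ DefinedFrom w' p' j' p' x := by
  rcases x with _ | ⟨z, x⟩
  · exact iff_of_true ⟨p, rfl⟩ ⟨p', rfl⟩
  · obtain ⟨rfl, rfl⟩ := List.cons.inj hxt
    refine hR (X b :: x) (uRX_X_cons_iff.2 ⟨?_, ?_⟩)
    · exact (numBlocks_le_append_left (X b :: x) t).trans (hs.2.1 ⟨b, _, rfl⟩)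
    · exact (List.length_append (as := x) (bs := t) ▸ Nat.le_add_right _ _).trans_lt hs.1

theorem definedFrom_X_cons_iff [LocallyFiniteOrder P] (hkl : k ≤ l + 1) (hlk : l ≤ k + 1)
    (hp : w p = some a) (hp' : w' p' = some a) (hip : i < p) (hip' : i' < p')
    (hR : ∀ r, uRX k n r → (DefinedOn w p j r ↔ DefinedOn w' p' j' r))
    (ih : ∀ t, t.length ≤ s.length → BlockBounded k l n t →
      (DefinedFrom w i j p t ↔ DefinedFrom w' i' j' p' t))
    (hs : BlockBounded k l n (X b :: s)) :
    DefinedFrom w i j p (X b :: s) ↔ DefinedFrom w' i' j' p' (X b :: s) := by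
  have hprefix := fun x t => definedFrom_prefix_iff (x := x) (t := t) hR hs
  by_cases hdef : DefinedFrom w p j p (X b :: s)
  · exact iff_of_true (hdef.imp fun _ => .mono_left hip.le)
      (((hprefix _ [] (by simp)).1 hdef).imp fun _ => .mono_left hip'.le)
  obtain ⟨x, z, t, hst, hx, hxz⟩ := exists_eq_append_cons_of_not ⟨p, rfl⟩ hdef
  obtain ⟨q', hq'⟩ := (hprefix x _ hst).1 hx
  have hxz' := mt (hprefix (x ++ [z]) t (by simpa using hst)).2 hxz
  obtain ⟨q, hq⟩ := hx
  rw [hst] at hs ⊢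
  cases z with
  | X c =>
    exact iff_of_false (not_definedFrom_append_X hip.le hq hxz)
      (not_definedFrom_append_X hip'.le hq' hxz')
  | Y c =>
    rw [definedFrom_append_iff hq] at hxz
    rw [definedFrom_append_iff hq'] at hxz'
    rw [definedFrom_append_iff (hq.mono_left hip.le),
      definedFrom_append_iff (hq'.mono_left hip'.le)]
    rcases x with _ | ⟨y, x⟩
    · simp at hst
    obtain ⟨rfl, rfl⟩ := List.cons.inj hst
    have hct : BlockBounded k l n (Y c :: t) := hs.of_append hkl hlk
    have hlen : t.length + 1 ≤ (x.append (Y c :: t)).length := by simp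
    exact definedFrom_Y_cons_congr hp hp' hip hip' hq.lt_of_X_cons hq'.lt_of_X_cons hxz hxz'
      (ih t (Nat.le_of_succ_le hlen) (hct.tail hkl hlk)) (ih _ hlen hct)

theorem definedFrom_Y_cons_iff [LocallyFiniteOrder P] (hkl : k ≤ l + 1) (hlk : l ≤ k + 1)
    (hp : w p = some a) (hp' : w' p' = some a) (hpj : p < j) (hpj' : p' < j')
    (hL : ∀ r, uRY l n r → (DefinedOn w i p r ↔ DefinedOn w' i' p' r))
    (ih : ∀ t, t.length ≤ s.length → BlockBounded k l n t →
      (DefinedFrom w i j p t ↔ DefinedFrom w' i' j' p' t))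
    (hs : BlockBounded k l n (Y b :: s)) :
    DefinedFrom w i j p (Y b :: s) ↔ DefinedFrom w' i' j' p' (Y b :: s) := by
  rw [← definedFrom_dual, ← definedFrom_dual (w := w')]
  refine definedFrom_X_cons_iff (P := Pᵒᵈ) (s := s.map RLetter.flip) (k := l) (l := k) hlk hkl
    hp hp' hpj hpj' ?_ ?_ (blockBounded_map_flip.2 hs)
  · refine forall_uRX_iff_forall_uRY_map_flip.2 fun r hr => ?_
    exact definedOn_dual.trans ((hL r hr).trans definedOn_dual.symm)
  · refine forall_ranker_iff_forall_map_flip.2 fun t ht hB => ?_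
    rw [List.length_map, List.length_map] at ht
    exact definedFrom_dual.trans
      ((ih t ht (blockBounded_map_flip.1 hB)).trans definedFrom_dual.symm)

theorem definedFrom_iff_of_definedOn_iff [LocallyFiniteOrder P] (hkl : k ≤ l + 1)
    (hlk : l ≤ k + 1) (hp : w p = some a) (hp' : w' p' = some a) (hpij : p ∈ Set.Ioo i j)
    (hpij' : p' ∈ Set.Ioo i' j')
    (hL : ∀ r, uRY l n r → (DefinedOn w i p r ↔ DefinedOn w' i' p' r))
    (hR : ∀ r, uRX k n r → (DefinedOn w p j r ↔ DefinedOn w' p' j' r))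
    (hs : BlockBounded k l n s) : DefinedFrom w i j p s ↔ DefinedFrom w' i' j' p' s := by
  induction hlen : s.length using Nat.strong_induction_on generalizing s with
  | _ d ih =>
    rcases s with _ | ⟨b | b, s⟩
    · exact iff_of_true ⟨p, rfl⟩ ⟨p', rfl⟩
    · exact definedFrom_X_cons_iff hkl hlk hp hp' hpij.1 hpij'.1 hR
        (fun t ht hB => ih _ (hlen ▸ Nat.lt_succ_of_le ht) hB rfl) hs
    · exact definedFrom_Y_cons_iff hkl hlk hp hp' hpij.2 hpij'.2 hL
        (fun t ht hB => ih _ (hlen ▸ Nat.lt_succ_of_le ht) hB rfl) hs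

end Crossing

section Transfer

open RLetter

variable {α P : Type*} [LinearOrder P] {w w' : P → Option α} {i j i' j' : P} {m n : ℕ}

theorem forall_uRY_definedOn_iff_of_dual
    (H : (∀ r, uRX m n r →
        (CondensedOn (P := Pᵒᵈ) (w ∘ OrderDual.ofDual) (OrderDual.toDual j) (OrderDual.toDual i) r ↔
        CondensedOn (P := Pᵒᵈ) (w' ∘ OrderDual.ofDual) (OrderDual.toDual j')
          (OrderDual.toDual i') r)) →
      ∀ r, uRX m n r →
        (DefinedOn (P := Pᵒᵈ) (w ∘ OrderDual.ofDual) (OrderDual.toDual j) (OrderDual.toDual i) r ↔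
        DefinedOn (P := Pᵒᵈ) (w' ∘ OrderDual.ofDual) (OrderDual.toDual j')
          (OrderDual.toDual i') r))
    (h : ∀ r, uRY m n r → (CondensedOn w i j r ↔ CondensedOn w' i' j' r)) :
    ∀ r, uRY m n r → (DefinedOn w i j r ↔ DefinedOn w' i' j' r) := by
  simp only [forall_uRX_iff_forall_uRY_map_flip, condensedOn_dual, definedOn_dual] at H
  exact H h

theorem definedOn_X_cons_iff_of_isStep [LocallyFiniteOrder P] {a : α} {p p' : P}
    {s : List (RLetter α)} (hp : IsStep w i j (X a) i p) (hp' : IsStep w' i' j' (X a) i' p')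
    (hL : ∀ r, uRY m n r → (DefinedOn w i p r ↔ DefinedOn w' i' p' r))
    (hR : ∀ r, uRX (m + 1) n r → (DefinedOn w p j r ↔ DefinedOn w' p' j' r))
    (hs : uRX (m + 1) (n + 1) (X a :: s)) :
    DefinedOn w i j (X a :: s) ↔ DefinedOn w' i' j' (X a :: s) := by
  rw [uRX_X_cons_iff] at hs
  have hbound : BlockBounded (m + 1) m n s := by
    rcases s with _ | ⟨b | b, s⟩ <;>
      simp [BlockBounded, startsX, startsY, numBlocks, sameDir] at * <;> omega
  have hstep {w : P → Option α} {i j p : P} (hp : IsStep w i j (X a) i p) :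
      DefinedOn w i j (X a :: s) ↔ DefinedFrom w i j p s :=
    definedFrom_cons_iff.trans ⟨fun ⟨q, hq, h⟩ => hq.unique hp ▸ h, fun h => ⟨p, hp, h⟩⟩
  rw [hstep hp, hstep hp']
  exact definedFrom_iff_of_definedOn_iff le_rfl (by omega) hp.label_X hp'.label_X
    ⟨hp.lt_X, hp.2⟩ ⟨hp'.lt_X, hp'.2⟩ hL hR hbound

theorem definedOn_iff_of_condensedOn_iff_uRX [LocallyFiniteOrder P]
    (h : ∀ r, uRX m n r → (CondensedOn w i j r ↔ CondensedOn w' i' j' r)) :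
    ∀ r, uRX m n r → (DefinedOn w i j r ↔ DefinedOn w' i' j' r) := by
  induction n generalizing P m with
  | zero => exact fun r hr => absurd (pos_of_uRX hr).2 (lt_irrefl 0)
  | succ n ih =>
    intro r hr
    obtain ⟨m, rfl⟩ : ∃ k, m = k + 1 := Nat.exists_eq_add_one.2 (pos_of_uRX hr).1
    rcases r with _ | ⟨a | a, t⟩
    · exact absurd rfl (ne_nil_of_uRX hr)
    · have hiff : (∃ p, IsStep w i j (X a) i p) ↔ ∃ p', IsStep w' i' j' (X a) i' p' :=
        condensedOn_singleton_iff.symm.trans ((h [X a] (uRX_X_cons_iff.2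
          ⟨by simp [numBlocks], n.succ_pos⟩)).trans condensedOn_singleton_iff)
      by_cases hstep : ∃ p, IsStep w i j (X a) i p
      · obtain ⟨p', hp'⟩ := hiff.1 hstep
        obtain ⟨p, hp⟩ := hstep
        refine definedOn_X_cons_iff_of_isStep hp hp' ?_ ?_ hr
        · refine forall_uRY_definedOn_iff_of_dual ih fun r hr => ?_
          exact ⟨condensedOn_left_of_isStep hp hp' (fun r hr => (h r hr).1) hr,
            condensedOn_left_of_isStep hp' hp (fun r hr => (h r hr).2) hr⟩
        · refine ih fun r hr => ?_
          exact ⟨condensedOn_right_of_isStep hp hp' (fun r hr => (h r hr).1) hr,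
            condensedOn_right_of_isStep hp' hp (fun r hr => (h r hr).2) hr⟩
      · exact iff_of_false (fun ⟨_, p, hp, _⟩ => hstep ⟨p, hp⟩)
          fun ⟨_, p', hp', _⟩ => hstep (hiff.2 ⟨p', hp'⟩)
    · rw [uRX_Y_cons_iff, Nat.lt_succ_iff, Nat.add_lt_add_iff_right, ← uRY_Y_cons_iff] at hr
      exact forall_uRY_definedOn_iff_of_dual ih (fun r hr => h r (uRX_succ_succ_of_uRY hr)) _ hr

theorem definedOn_iff_of_condensedOn_iff_uRY [LocallyFiniteOrder P]
    (h : ∀ r, uRY m n r → (CondensedOn w i j r ↔ CondensedOn w' i' j' r)) :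
    ∀ r, uRY m n r → (DefinedOn w i j r ↔ DefinedOn w' i' j' r) :=
  forall_uRY_definedOn_iff_of_dual definedOn_iff_of_condensedOn_iff_uRX h

end Transfer

section LetterAt

variable {α : Type*} {u : List α} {p : ℕ}

/-- The word `u` as a labelling of `ℕ`, where positions are numbered from `1`. -/
def letterAt (u : List α) : ℕ → Option α
  | 0 => none
  | k + 1 => u[k]?

theorem letterAt_of_pos (hp : 0 < p) : letterAt u p = u[p - 1]? := by
  obtain ⟨k, rfl⟩ := Nat.exists_eq_add_one.2 hp
  rfl

theorem pos_and_le_length_of_letterAt_eq_some {a : α} (h : letterAt u p = some a) :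
    0 < p ∧ p ≤ u.length := by
  rcases p with _ | k
  · simp [letterAt] at h
  · exact ⟨k.succ_pos, (List.getElem?_eq_some_iff.1 h).1⟩

end LetterAt

section Words

open RLetter

variable {u : List A} {p q i j : ℕ}

theorem nextOcc_eq_some_iff_s7 {a : A} :
    nextOcc u a q = some p ↔ IsLeast (occAfter (letterAt u) a q) p := by
  rw [nextOcc, head?_eq_some_iff_isLeast (List.pairwise_lt_range.filter _)]
  congr!
  ext x
  simp only [List.mem_filter, List.mem_range, decide_eq_true_eq, Set.mem_ofPred_eq, occAfter]
  constructor
  · rintro ⟨-, hqx, hx⟩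
    exact ⟨hqx, (letterAt_of_pos hqx.pos).trans hx⟩
  · rintro ⟨hqx, hx⟩
    have := pos_and_le_length_of_letterAt_eq_some hx
    exact ⟨by omega, hqx, (letterAt_of_pos this.1).symm.trans hx⟩

theorem prevOcc_eq_some_iff_s7 {a : A} :
    prevOcc u a q = some p ↔ IsGreatest (occBefore (letterAt u) a q) p := by
  rw [prevOcc, getLast?_eq_some_iff_isGreatest (List.pairwise_lt_range.filter _)]
  congr!
  ext x
  simp only [List.mem_filter, List.mem_range, decide_eq_true_eq, Set.mem_ofPred_eq, occBefore]
  constructor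
  · rintro ⟨-, hx0, hxq, hx⟩
    exact ⟨hxq, (letterAt_of_pos hx0).trans hx⟩
  · rintro ⟨hxq, hx⟩
    have := pos_and_le_length_of_letterAt_eq_some hx
    exact ⟨by omega, this.1, hxq, (letterAt_of_pos this.1).symm.trans hx⟩

theorem stepR_eq_some_iff {z : RLetter A} :
    stepR u z q = some p ↔ IsStep (letterAt u) 0 (u.length + 1) z q p := by
  cases z with
  | X a =>
    rw [stepR, nextOcc_eq_some_iff_s7]
    exact ⟨fun h => ⟨h, Nat.lt_succ_of_le (pos_and_le_length_of_letterAt_eq_some h.1.2).2⟩,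
      And.left⟩
  | Y a =>
    rw [stepR, prevOcc_eq_some_iff_s7]
    exact ⟨fun h => ⟨h, (pos_and_le_length_of_letterAt_eq_some h.1.2).1⟩, And.left⟩

theorem isStep_letterAt_origin_iff {z : RLetter A} :
    IsStep (letterAt u) i j z (z.origin i j) p ↔
      stepR u z (z.origin i j) = some p ∧ i < p ∧ p < j := by
  cases z with
  | X a =>
    rw [stepR, nextOcc_eq_some_iff_s7]
    exact ⟨fun h => ⟨h.1, h.lt_X, h.2⟩, fun h => ⟨h.1, h.2.2⟩⟩
  | Y a =>
    rw [stepR, prevOcc_eq_some_iff_s7]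
    exact ⟨fun h => ⟨h.1, h.2, h.1.1.1⟩, fun h => ⟨h.1, h.2.1⟩⟩

theorem evalFrom_eq_some_iff {r : List (RLetter A)} :
    evalFrom u r q = some p ↔ RunsTo (letterAt u) 0 (u.length + 1) r q p := by
  induction r generalizing q with
  | nil => simp [evalFrom, RunsTo]
  | cons z r ih => simp [evalFrom, RunsTo, Option.bind_eq_some_iff, stepR_eq_some_iff, ih]

theorem defined_iff_definedOn {r : List (RLetter A)} (hr : r ≠ []) :
    Defined u r ↔ DefinedOn (letterAt u) 0 (u.length + 1) r := by
  rcases r with _ | ⟨a | a, t⟩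
  · exact absurd rfl hr
  all_goals
    rw [Defined, Option.isSome_iff_exists]
    exact exists_congr fun p => evalFrom_eq_some_iff

/-- Passing from the interval `(i; j)` to `(i'; j')` when the ranker letter `z` is followed by
`y`. This unifies the four update rules of `Condensed`: the position reached by `z` becomes the
end from which `y` starts, and the other end is kept. -/
def IntervalStep (u : List A) (z y : RLetter A) (i j i' j' : ℕ) : Prop :=
  stepR u z (z.origin i j) = some (y.origin i' j') ∧ y.origin j' i' = y.origin j i ∧
    i ≤ i' ∧ j' ≤ j ∧ (i < i' ∨ j' < j)

/-- The intervals `(i k; j k)` form a chain witnessing that the ranker `r`, leading to the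
position `p`, is condensed. The interval for `k = 0` is arbitrary. -/
def IsIntervalChain (u : List A) (r : List (RLetter A)) (p : ℕ) (i j : ℕ → ℕ) : Prop :=
  (∀ k z y, r[k]? = some z → r[k + 1]? = some y →
    IntervalStep u z y (i k) (j k) (i (k + 1)) (j (k + 1))) ∧
  i (r.length - 1) < p ∧ p < j (r.length - 1)

theorem isIntervalChain_cons_cons_iff {z y : RLetter A} {t : List (RLetter A)} {i j : ℕ → ℕ} :
    IsIntervalChain u (z :: y :: t) p i j ↔ IntervalStep u z y (i 0) (j 0) (i 1) (j 1) ∧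
      IsIntervalChain u (y :: t) p (fun k => i (k + 1)) (fun k => j (k + 1)) := by
  constructor
  · rintro ⟨h, hp⟩
    exact ⟨h 0 z y rfl rfl, fun k => h (k + 1), hp⟩
  · rintro ⟨h0, h, hp⟩
    refine ⟨fun k => ?_, hp⟩
    cases k with
    | zero =>
      rintro z' y' hz hy
      obtain rfl := Option.some_injective _ hz
      obtain rfl := Option.some_injective _ hy
      exact h0
    | succ k => exact h k

theorem condensedOn_letterAt_cons_cons_iff {z y : RLetter A} {t : List (RLetter A)} :
    CondensedOn (letterAt u) i j (z :: y :: t) ↔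
      ∃ i' j', IntervalStep u z y i j i' j' ∧ CondensedOn (letterAt u) i' j' (y :: t) := by
  simp only [condensedOn_cons_cons_iff, isStep_letterAt_origin_iff]
  constructor
  · rintro ⟨p, ⟨hp, hip, hpj⟩, h⟩
    refine ⟨_, _, ?_, h⟩
    cases y with
    | X b => exact ⟨hp, rfl, hip.le, le_rfl, .inl hip⟩
    | Y b => exact ⟨hp, rfl, le_rfl, hpj.le, .inr hpj⟩
  · rintro ⟨i', j', ⟨hp, hend, hi, hj, hlt⟩, h⟩
    have hij := lt_of_condensedOn_cons h
    cases y with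
    | X b =>
      obtain rfl : j' = j := hend
      exact ⟨i', ⟨hp, by omega, hij⟩, h⟩
    | Y b =>
      obtain rfl : i' = i := hend
      exact ⟨j', ⟨hp, hij, by omega⟩, h⟩

theorem exists_isIntervalChain_iff {z : RLetter A} {t : List (RLetter A)} {i₀ j₀ : ℕ} :
    (∃ p i j, evalFrom u (z :: t) (z.origin i₀ j₀) = some p ∧ i 0 = i₀ ∧ j 0 = j₀ ∧
      IsIntervalChain u (z :: t) p i j) ↔ CondensedOn (letterAt u) i₀ j₀ (z :: t) := by
  induction t generalizing z i₀ j₀ with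
  | nil =>
    simp only [condensedOn_singleton_iff, isStep_letterAt_origin_iff]
    constructor
    · rintro ⟨p, i, j, hp, rfl, rfl, -, hip, hpj⟩
      exact ⟨p, by simpa [evalFrom] using hp, hip, hpj⟩
    · rintro ⟨p, hp, hip, hpj⟩
      exact ⟨p, fun _ => i₀, fun _ => j₀, by simpa [evalFrom] using hp, rfl, rfl,
        by simp, hip, hpj⟩
  | cons y t ih =>
    simp only [condensedOn_letterAt_cons_cons_iff, ← ih]
    constructor
    · rintro ⟨p, i, j, hp, rfl, rfl, hchain⟩
      obtain ⟨hstep, hchain⟩ := isIntervalChain_cons_cons_iff.1 hchain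
      refine ⟨i 1, j 1, hstep, p, _, _, ?_, rfl, rfl, hchain⟩
      rwa [evalFrom, hstep.1] at hp
    · rintro ⟨_, _, hstep, p, i, j, hp, rfl, rfl, hchain⟩
      refine ⟨p, fun k => k.casesOn i₀ i, fun k => k.casesOn j₀ j, ?_, rfl, rfl,
        isIntervalChain_cons_cons_iff.2 ⟨hstep, hchain⟩⟩
      rwa [evalFrom, hstep.1]

theorem condensed_iff_exists_isIntervalChain {r : List (RLetter A)} :
    Condensed u r ↔ ∃ p i j, evalR u r = some p ∧ i 0 = 0 ∧ j 0 = u.length + 1 ∧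
      IsIntervalChain u r p i j := by
  refine exists_congr fun p => exists_congr fun i => exists_congr fun j =>
    and_congr_right' (and_congr_right' (and_congr_right' ?_))
  constructor
  · rintro ⟨hXX, hYY, hXY, hYX, hsub, hp⟩
    refine ⟨fun k z y hz hy => ?_, hp⟩
    have hlt := hsub (k + 1) k.succ_pos (List.getElem?_eq_some_iff.1 hy).1
    rcases z with a | a <;> rcases y with b | b
    · obtain ⟨hi, hj⟩ := hXX (k + 1) a b k.succ_pos hz hy
      exact ⟨hi, hj, hlt⟩
    · obtain ⟨hi, hj⟩ := hXY (k + 1) a b k.succ_pos hz hy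
      exact ⟨hj, hi, hlt⟩
    · obtain ⟨hi, hj⟩ := hYX (k + 1) a b k.succ_pos hz hy
      exact ⟨hi, hj, hlt⟩
    · obtain ⟨hi, hj⟩ := hYY (k + 1) a b k.succ_pos hz hy
      exact ⟨hj, hi, hlt⟩
  · rintro ⟨h, hp⟩
    have hstep : ∀ l z y, 1 ≤ l → r[l - 1]? = some z → r[l]? = some y →
        IntervalStep u z y (i (l - 1)) (j (l - 1)) (i l) (j l) := by
      intro l z y hl hz hy
      obtain ⟨k, rfl⟩ := Nat.exists_eq_add_one.2 hl
      exact h k z y hz hy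
    refine ⟨fun l a b hl hz hy => ?_, fun l a b hl hz hy => ?_, fun l a b hl hz hy => ?_,
      fun l a b hl hz hy => ?_, fun l hl hlen => ?_, hp⟩
    · exact ⟨(hstep l _ _ hl hz hy).1, (hstep l _ _ hl hz hy).2.1⟩
    · exact ⟨(hstep l _ _ hl hz hy).2.1, (hstep l _ _ hl hz hy).1⟩
    · exact ⟨(hstep l _ _ hl hz hy).2.1, (hstep l _ _ hl hz hy).1⟩
    · exact ⟨(hstep l _ _ hl hz hy).1, (hstep l _ _ hl hz hy).2.1⟩
    · exact (hstep l _ _ hl (List.getElem?_eq_getElem (by omega))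
        (List.getElem?_eq_getElem hlen)).2.2

theorem condensed_iff_condensedOn {r : List (RLetter A)} (hr : r ≠ []) :
    Condensed u r ↔ CondensedOn (letterAt u) 0 (u.length + 1) r := by
  rw [condensed_iff_exists_isIntervalChain]
  rcases r with _ | ⟨a | a, t⟩
  · exact absurd rfl hr
  all_goals exact exists_isIntervalChain_iff

end Words

/-- Agreement on condensed rankers from `uR^Z_{m,n}` implies agreement
on rankers from the same class. -/
theorem statement7 (m n : ℕ) (hm : 1 ≤ m) (hmn : m ≤ n)
    (ZR : ℕ → ℕ → List (RLetter A) → Prop) (hZR : ZR = uRX ∨ ZR = uRY)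
    (u v : List A) (hu : u ≠ []) (hv : v ≠ [])
    (hagree : ∀ r, ZR m n r → (Condensed u r ↔ Condensed v r)) :
    ∀ r, ZR m n r → (Defined u r ↔ Defined v r) := by
  have hne : ∀ r, ZR m n r → r ≠ [] := by
    rcases hZR with rfl | rfl
    · exact fun r => ne_nil_of_uRX
    · exact fun r hr => ne_nil_of_uRX (uRX_succ_succ_of_uRY hr)
  have hcond : ∀ r, ZR m n r → (CondensedOn (letterAt u) 0 (u.length + 1) r ↔
      CondensedOn (letterAt v) 0 (v.length + 1) r) := fun r hr => by
    simpa only [condensed_iff_condensedOn (hne r hr)] using hagree r hr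
  have hdef : ∀ r, ZR m n r → (DefinedOn (letterAt u) 0 (u.length + 1) r ↔
      DefinedOn (letterAt v) 0 (v.length + 1) r) := by
    rcases hZR with rfl | rfl
    · exact definedOn_iff_of_condensedOn_iff_uRX hcond
    · exact definedOn_iff_of_condensedOn_iff_uRY hcond
  intro r hr
  rw [defined_iff_definedOn (hne r hr), defined_iff_definedOn (hne r hr)]
  exact hdef r hr

end RankerPaper
end
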